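/- arXiv:1708.06999 — 4 statements merged into one kernel-verified Lean document; each statement's English description precedes it below -/
import Mathlib

section
/- Let φ : ℝ² → ℝ be a Lipschitz function that is positively homogeneous of degree 1, and set Φ(t) = φ(cos t, sin t) for t ∈ [0, 2π]. Then φ is representable on ℝ² as a difference of two convex functions if and only if there exists a constant c > 0 such that ∨(Φ'; 0, 2π) < c. -/
/-!
Write `Φ t = φ (cos t, sin t)`.

Suppose `φ = f₁ - f₂` with `fᵢ` convex. Each `fᵢ` is Lipschitz on the unit disc, and the circle
deviates from its chords to second order only, so `fᵢ (cos t, sin t) + M * t ^ 2` is convex in `t`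
for large `M` (`exists_convexOn_circlePt_add_sq`). Hence `Φ` is a difference of convex functions of
one variable, and `Φ'` is the difference of two monotone right derivatives, whose increments over
`[0, 2π]` bound the variation (`derivVariation_le_of_convexOn_sub`).

Conversely, if `Φ'` has bounded variation, its Jordan decomposition integrates to `Φ = H₁ - H₂` on
`[0, 2π]` with `Hᵢ` convex and, after adding a common constant, nonnegative
(`exists_sub_of_derivVariation_ne_top`). Nonnegativity gives `Hᵢ'' + Hᵢ ≥ 0`, the condition for
`r * Hᵢ s` to be convex in the plane. Concretely, on an interval of length `π` the sinusoids tangent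
to `Hᵢ` stay below `Hᵢ` (`tangent_sinusoid_le`); they correspond to linear functions on the plane,
whose supremum is a convex Lipschitz extension of `r * Hᵢ s` from a half-plane
(`exists_convexOn_extension`). So `φ` equals a difference `a` of convex functions on the upper
half-plane and `b` on the lower one. With `M` a Lipschitz bound, `φ` is the minimum of
`a + M * max (-y) 0` and `b + M * max y 0`, and differences of convex functions are closed under
minima (`exists_convexOn_sub_of_halfPlanes`).
-/

open Set
open scoped ENNReal NNReal

noncomputable section

/-- Variation of the derivative of `f` on `[a,b]`: supremum, over finite increasing
sequences of points of `[a,b]` at which `f` is differentiable, of the sums of norms of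
consecutive differences of derivatives. -/
def derivVariation {E : Type*} [NormedAddCommGroup E] [NormedSpace ℝ E]
    (f : ℝ → E) (a b : ℝ) : ℝ≥0∞ :=
  ⨆ (N : ℕ) (t : Fin (N + 1) → ℝ) (_ : StrictMono t)
    (_ : ∀ i, t i ∈ Set.Icc a b ∧ DifferentiableAt ℝ f (t i)),
    ∑ i : Fin N, ENNReal.ofReal ‖deriv f (t i.succ) - deriv f (t i.castSucc)‖

/-- The point `(cos t, sin t)` on the unit circle of the Euclidean plane. -/
def circlePt (t : ℝ) : EuclideanSpace ℝ (Fin 2) :=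
  (WithLp.equiv 2 (Fin 2 → ℝ)).symm ![Real.cos t, Real.sin t]

/-! ### Elementary facts about the plane and the circle -/

local notation "E₂" => EuclideanSpace ℝ (Fin 2)

@[simp] lemma circlePt_zero (t : ℝ) : circlePt t 0 = Real.cos t := rfl

@[simp] lemma circlePt_one (t : ℝ) : circlePt t 1 = Real.sin t := rfl

lemma norm_le_abs_add_abs (x : E₂) : ‖x‖ ≤ |x 0| + |x 1| := by
  rw [EuclideanSpace.norm_eq, Fin.sum_univ_two, Real.norm_eq_abs, Real.norm_eq_abs]
  apply Real.sqrt_le_iff.2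
  constructor
  · positivity
  · nlinarith [abs_nonneg (x 0), abs_nonneg (x 1)]

lemma norm_circlePt (t : ℝ) : ‖circlePt t‖ = 1 := by
  rw [EuclideanSpace.norm_eq, Fin.sum_univ_two]
  simp

lemma lipschitzWith_circlePt : LipschitzWith 2 circlePt := by
  refine LipschitzWith.of_dist_le_mul fun s t => ?_
  rw [dist_eq_norm]
  refine (norm_le_abs_add_abs _).trans ?_
  have hc := Real.lipschitzWith_cos.dist_le_mul s t
  have hs := Real.lipschitzWith_sin.dist_le_mul s t
  simp only [Real.dist_eq, NNReal.coe_one, one_mul] at hc hs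
  simp only [PiLp.sub_apply, circlePt_zero, circlePt_one, Real.dist_eq, NNReal.coe_ofNat]
  linarith

/-- Polar coordinates for the closed upper half-plane. -/
lemma exists_polar_of_nonneg (x : E₂) (hx : 0 ≤ x 1) :
    ∃ r : ℝ, 0 ≤ r ∧ ∃ s ∈ Icc (0 : ℝ) Real.pi, x = r • circlePt s := by
  refine ⟨‖(⟨x 0, x 1⟩ : ℂ)‖, norm_nonneg _, Complex.arg ⟨x 0, x 1⟩,
    ⟨Complex.arg_nonneg_iff.2 hx, Complex.arg_le_pi _⟩, ?_⟩
  ext i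
  fin_cases i
  · simp [Complex.norm_mul_cos_arg]
  · simp [Complex.norm_mul_sin_arg]

/-- Polar coordinates for the closed lower half-plane. -/
lemma exists_polar_of_nonpos (x : E₂) (hx : x 1 ≤ 0) :
    ∃ r : ℝ, 0 ≤ r ∧ ∃ s ∈ Icc Real.pi (Real.pi + Real.pi), x = r • circlePt s := by
  obtain ⟨r, hr, s, hs, h⟩ := exists_polar_of_nonneg (-x) (by simpa using hx)
  refine ⟨r, hr, s + Real.pi, ⟨by linarith [hs.1], by linarith [hs.2]⟩, ?_⟩
  have h0 : -x 0 = r * Real.cos s := congrArg (fun z : E₂ => z 0) h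
  have h1 : -x 1 = r * Real.sin s := congrArg (fun z : E₂ => z 1) h
  ext i
  fin_cases i
  · simp only [Fin.zero_eta, PiLp.smul_apply, circlePt_zero, Real.cos_add_pi, smul_eq_mul]
    linarith
  · simp only [Fin.mk_one, PiLp.smul_apply, circlePt_one, Real.sin_add_pi, smul_eq_mul]
    linarith

/-! ### A difference of convex functions has derivative of bounded variation on the circle -/

lemma convexOn_cos_add_sq : ConvexOn ℝ univ (fun t : ℝ => Real.cos t + t ^ 2 / 2) := by
  have h1 : ∀ t : ℝ, HasDerivAt (fun t : ℝ => Real.cos t + t ^ 2 / 2) (-Real.sin t + t) t := by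
    intro t
    have := (Real.hasDerivAt_cos t).add ((hasDerivAt_pow 2 t).div_const 2)
    convert! this using 1
    simp
  refine Monotone.convexOn_univ_of_deriv (fun t => (h1 t).differentiableAt) ?_
  rw [show deriv (fun t : ℝ => Real.cos t + t ^ 2 / 2) = fun t => -Real.sin t + t from
    funext fun t => (h1 t).deriv]
  intro s t hst
  have hs := Real.lipschitzWith_sin.dist_le_mul s t
  simp only [Real.dist_eq, NNReal.coe_one, one_mul] at hs
  rw [abs_sub_comm s t, abs_of_nonneg (sub_nonneg.2 hst)] at hs
  have := neg_le_abs (Real.sin s - Real.sin t)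
  simp only
  linarith

/-- Second-order deviation of the cosine from a chord, one-sided. The other bound, and those for
the sine, follow by shifting the argument. -/
lemma cos_chord_le {a b v w : ℝ} (hv : 0 ≤ v) (hw : 0 ≤ w) (hvw : v + w = 1) :
    Real.cos (v * a + w * b) - (v * Real.cos a + w * Real.cos b) ≤ v * w * (a - b) ^ 2 / 2 := by
  have h := convexOn_cos_add_sq.2 (mem_univ a) (mem_univ b) hv hw hvw
  simp only [smul_eq_mul] at h
  obtain rfl : w = 1 - v := by linarith
  nlinarith

lemma abs_cos_chord_le {a b v w : ℝ} (hv : 0 ≤ v) (hw : 0 ≤ w) (hvw : v + w = 1) :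
    |Real.cos (v * a + w * b) - (v * Real.cos a + w * Real.cos b)| ≤ v * w * (a - b) ^ 2 / 2 := by
  refine abs_le.2 ⟨?_, cos_chord_le hv hw hvw⟩
  have h := cos_chord_le (a := a + Real.pi) (b := b + Real.pi) hv hw hvw
  rw [show v * (a + Real.pi) + w * (b + Real.pi) = v * a + w * b + Real.pi by
    linear_combination Real.pi * hvw] at h
  simp only [Real.cos_add_pi, add_sub_add_right_eq_sub] at h
  linarith

lemma abs_sin_chord_le {a b v w : ℝ} (hv : 0 ≤ v) (hw : 0 ≤ w) (hvw : v + w = 1) :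
    |Real.sin (v * a + w * b) - (v * Real.sin a + w * Real.sin b)| ≤ v * w * (a - b) ^ 2 / 2 := by
  have h := abs_cos_chord_le (a := a - Real.pi / 2) (b := b - Real.pi / 2) hv hw hvw
  rw [show v * (a - Real.pi / 2) + w * (b - Real.pi / 2) = v * a + w * b - Real.pi / 2 by
    linear_combination (-Real.pi / 2) * hvw] at h
  simpa only [Real.cos_sub_pi_div_two, sub_sub_sub_cancel_right] using h

/-- The restriction of a convex function to the circle becomes convex in the angle once a large
multiple of `t ^ 2` is added: the function is Lipschitz on the disc, and the arc deviates from
its chords only to second order. -/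
lemma exists_convexOn_circlePt_add_sq {f : E₂ → ℝ} (hf : ConvexOn ℝ univ f) :
    ∃ K : ℝ, ∀ M, K ≤ M → ConvexOn ℝ univ (fun t : ℝ => f (circlePt t) + M * t ^ 2) := by
  obtain ⟨K, hK⟩ := LocallyLipschitzOn.exists_lipschitzOnWith_of_compact
    (isCompact_closedBall (0 : E₂) 1) hf.locallyLipschitz.locallyLipschitzOn
  refine ⟨K, fun M hM => ⟨convex_univ, fun a _ b _ v w hv hw hvw => ?_⟩⟩
  have hball : ∀ t, circlePt t ∈ Metric.closedBall (0 : E₂) 1 := fun t => by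
    simp [norm_circlePt]
  have hP : v • circlePt a + w • circlePt b ∈ Metric.closedBall (0 : E₂) 1 :=
    convex_closedBall _ _ (hball a) (hball b) hv hw hvw
  have h1 := hf.2 (mem_univ (circlePt a)) (mem_univ (circlePt b)) hv hw hvw
  have h2 := hK.dist_le_mul _ (hball (v * a + w * b)) _ hP
  have h3 : dist (circlePt (v * a + w * b)) (v • circlePt a + w • circlePt b)
      ≤ v * w * (a - b) ^ 2 := by
    rw [dist_eq_norm]
    refine (norm_le_abs_add_abs _).trans ?_
    have hc := abs_cos_chord_le (a := a) (b := b) hv hw hvw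
    have hs := abs_sin_chord_le (a := a) (b := b) hv hw hvw
    simp only [PiLp.sub_apply, PiLp.add_apply, PiLp.smul_apply, circlePt_zero, circlePt_one,
      smul_eq_mul]
    linarith
  have h4 : (K : ℝ) * dist (circlePt (v * a + w * b)) (v • circlePt a + w • circlePt b)
      ≤ M * (v * w * (a - b) ^ 2) := mul_le_mul hM h3 dist_nonneg (K.2.trans hM)
  have h5 := (le_abs_self _).trans h2
  simp only [smul_eq_mul] at h1 ⊢
  have h6 : v * (M * a ^ 2) + w * (M * b ^ 2) - M * (v * a + w * b) ^ 2
      = M * (v * w * (a - b) ^ 2) := by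
    obtain rfl : w = 1 - v := by linarith
    ring
  linarith

lemma sum_fin_succ_sub (N : ℕ) (u : Fin (N + 1) → ℝ) :
    ∑ i : Fin N, (u i.succ - u i.castSucc) = u (Fin.last N) - u 0 := by
  induction N with
  | zero => simp
  | succ n ih =>
    rw [Fin.sum_univ_castSucc]
    have := ih (fun i => u i.castSucc)
    simp only [Fin.castSucc_zero] at this
    simp only [Fin.succ_castSucc, Fin.succ_last]
    rw [this]
    ring

/-- If `f` is a difference of convex functions of one variable, its derivative is, wherever it
exists, the difference of their right derivatives, which are monotone. -/
lemma derivVariation_le_of_convexOn_sub {f g₁ g₂ : ℝ → ℝ} (h₁ : ConvexOn ℝ univ g₁)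
    (h₂ : ConvexOn ℝ univ g₂) (hf : f = g₁ - g₂) (a b : ℝ) :
    ∃ c : ℝ, 0 ≤ c ∧ derivVariation f a b ≤ ENNReal.ofReal c := by
  set r : (ℝ → ℝ) → ℝ → ℝ := fun g t => derivWithin g (Ioi t) t with hr
  have hmono : ∀ {g : ℝ → ℝ}, ConvexOn ℝ univ g → Monotone (r g) := fun {g} hg => by
    have := hg.monotoneOn_rightDeriv
    rwa [interior_univ, monotoneOn_univ] at this
  have hm₁ := hmono h₁
  have hm₂ := hmono h₂
  have hderiv : ∀ t, DifferentiableAt ℝ f t → deriv f t = r g₁ t - r g₂ t := by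
    intro t ht
    have hd : ∀ {g : ℝ → ℝ}, ConvexOn ℝ univ g → HasDerivWithinAt g (r g t) (Ioi t) t :=
      fun hg => hg.hasDerivWithinAt_rightDeriv_of_mem_interior (by simp)
    have e₁ : HasDerivWithinAt f (r g₁ t - r g₂ t) (Ioi t) t := by
      rw [hf]; exact (hd h₁).sub (hd h₂)
    exact (uniqueDiffWithinAt_Ioi t).eq_deriv _ ht.hasDerivAt.hasDerivWithinAt e₁
  refine ⟨|(r g₁ b + r g₂ b) - (r g₁ a + r g₂ a)|, abs_nonneg _, ?_⟩
  refine iSup_le fun N => iSup_le fun t => iSup_le fun ht => iSup_le fun hmem => ?_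
  have hstep : ∀ i : Fin N, ‖deriv f (t i.succ) - deriv f (t i.castSucc)‖ ≤
      (r g₁ (t i.succ) + r g₂ (t i.succ)) - (r g₁ (t i.castSucc) + r g₂ (t i.castSucc)) := by
    intro i
    rw [hderiv _ (hmem _).2, hderiv _ (hmem _).2, Real.norm_eq_abs, abs_le]
    have hle : t i.castSucc ≤ t i.succ := (ht Fin.castSucc_lt_succ).le
    have := hm₁ hle
    have := hm₂ hle
    constructor <;> linarith
  rw [← ENNReal.ofReal_sum_of_nonneg fun i _ => norm_nonneg _]
  refine ENNReal.ofReal_le_ofReal (((Finset.sum_le_sum fun i _ => hstep i).trans_eq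
    (sum_fin_succ_sub N fun i => r g₁ (t i) + r g₂ (t i))).trans (le_trans ?_ (le_abs_self _)))
  have k1 := hm₁ (hmem (Fin.last N)).1.2
  have k2 := hm₂ (hmem (Fin.last N)).1.2
  have k3 := hm₁ (hmem 0).1.1
  have k4 := hm₂ (hmem 0).1.1
  linarith

/-! ### Primitives of functions of bounded variation -/

lemma eVariationOn_deriv_le_derivVariation (f : ℝ → ℝ) (a b : ℝ) :
    eVariationOn (deriv f) {t | t ∈ Icc a b ∧ DifferentiableAt ℝ f t} ≤ derivVariation f a b := by
  rw [eVariationOn.eVariationOn_eq_strictMonoOn]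
  refine iSup_le ?_
  rintro ⟨n, u, hu, hmem⟩
  have hle : ∀ i : Fin (n + 1), (i : ℕ) ∈ Iic n := fun i => Nat.lt_succ_iff.1 i.2
  refine le_trans (le_of_eq ?_) (le_iSup_of_le n (le_iSup_of_le (fun i : Fin (n + 1) => u i)
    (le_iSup_of_le (fun i j hij => hu (hle i) (hle j) hij)
      (le_iSup_of_le (fun i => hmem i (hle i)) le_rfl))))
  rw [Finset.sum_range]
  refine Finset.sum_congr rfl fun i _ => ?_
  rw [edist_dist, dist_eq_norm]
  rfl

/-- Jordan decomposition of the derivative, with both monotone functions defined on all of `ℝ`. -/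
lemma exists_monotone_sub_of_derivVariation_ne_top {f : ℝ → ℝ} {a b : ℝ}
    (h : derivVariation f a b ≠ ∞) :
    ∃ p q : ℝ → ℝ, Monotone p ∧ Monotone q ∧
      ∀ t ∈ Icc a b, DifferentiableAt ℝ f t → deriv f t = p t - q t := by
  set D : Set ℝ := {t | t ∈ Icc a b ∧ DifferentiableAt ℝ f t} with hD
  rcases D.eq_empty_or_nonempty with hE | ⟨c, hc⟩
  · exact ⟨0, 0, monotone_const, monotone_const, fun t ht hd =>
      ((hE ▸ (⟨ht, hd⟩ : t ∈ D) : t ∈ (∅ : Set ℝ))).elim⟩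
  have hV : BoundedVariationOn (deriv f) D :=
    ne_top_of_le_ne_top h (eVariationOn_deriv_le_derivVariation f a b)
  obtain ⟨p, q, hp, hq, hpq, hsum⟩ :=
    hV.locallyBoundedVariationOn.exists_monotoneOn_sub_monotoneOn'
  set V := (eVariationOn (deriv f) D).toReal with hVdef
  have hvar : ∀ x y, variationOnFromTo (deriv f) D x y ≤ V := by
    intro x y
    have hmono : ∀ x y, (eVariationOn (deriv f) (D ∩ Icc x y)).toReal ≤ V := fun x y =>
      ENNReal.toReal_mono hV (eVariationOn.mono _ inter_subset_left)
    rw [variationOnFromTo]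
    split_ifs
    · exact hmono _ _
    · exact (neg_nonpos.2 ENNReal.toReal_nonneg).trans ENNReal.toReal_nonneg
  have hbdd : ∀ x ∈ D, |p x - p c| ≤ V ∧ |q x - q c| ≤ V := by
    intro x hx
    rcases le_total c x with hcx | hxc
    · have := hp hc hx hcx
      have := hq hc hx hcx
      have := hsum c hc x hx
      have := hvar c x
      rw [abs_of_nonneg (by linarith), abs_of_nonneg (by linarith)]
      constructor <;> linarith
    · have := hp hx hc hxc
      have := hq hx hc hxc
      have := hsum x hx c hc
      have := hvar x c
      rw [abs_of_nonpos (by linarith), abs_of_nonpos (by linarith)]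
      constructor <;> linarith
  have hext : ∀ r : ℝ → ℝ, MonotoneOn r D → (∀ x ∈ D, |r x - r c| ≤ V) →
      ∃ g : ℝ → ℝ, Monotone g ∧ EqOn r g D := fun r hr hb =>
    hr.exists_monotone_extension
      ⟨r c - V, by rintro _ ⟨x, hx, rfl⟩; linarith [(abs_le.1 (hb x hx)).1]⟩
      ⟨r c + V, by rintro _ ⟨x, hx, rfl⟩; linarith [(abs_le.1 (hb x hx)).2]⟩
  obtain ⟨P, hP, hpP⟩ := hext p hp fun x hx => (hbdd x hx).1
  obtain ⟨Q, hQ, hqQ⟩ := hext q hq fun x hx => (hbdd x hx).2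
  refine ⟨P, Q, hP, hQ, fun t ht hd => ?_⟩
  rw [← hpP ⟨ht, hd⟩, ← hqQ ⟨ht, hd⟩, hpq, Pi.sub_apply]

/-- Tangent-line inequality for the primitive of a monotone function. -/
lemma Monotone.mul_sub_le_integral {g : ℝ → ℝ} (hg : Monotone g) (s t : ℝ) :
    g t * (s - t) ≤ ∫ x in t..s, g x := by
  have hi : ∀ u v, IntervalIntegrable g MeasureTheory.volume u v := fun u v => hg.intervalIntegrable
  have hc : ∀ u v, ∫ _ in u..v, g t = g t * (v - u) := fun u v => by
    rw [intervalIntegral.integral_const, smul_eq_mul, mul_comm]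
  rcases le_total t s with h | h
  · rw [← hc]
    exact intervalIntegral.integral_mono_on h intervalIntegrable_const (hi _ _)
      fun x hx => hg hx.1
  · have := intervalIntegral.integral_mono_on h (hi _ _) intervalIntegrable_const
      fun x hx => hg hx.2
    rw [hc] at this
    rw [intervalIntegral.integral_symm]
    linarith

/-- A Lipschitz function whose derivative has bounded variation is a difference of convex
functions that are nonnegative on `[a, b]`. Convexity is expressed by a slope `pᵢ t` of a supporting
line at every point `t`. -/
lemma exists_sub_of_derivVariation_ne_top {f : ℝ → ℝ} {K : ℝ≥0} (hf : LipschitzWith K f)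
    {a b : ℝ} (h : derivVariation f a b ≠ ∞) :
    ∃ p₁ p₂ H₁ H₂ : ℝ → ℝ, Monotone p₁ ∧ Monotone p₂ ∧
      (∀ s t, p₁ t * (s - t) ≤ H₁ s - H₁ t) ∧ (∀ s t, p₂ t * (s - t) ≤ H₂ s - H₂ t) ∧
      (∀ t ∈ Icc a b, 0 ≤ H₁ t) ∧ (∀ t ∈ Icc a b, 0 ≤ H₂ t) ∧
      ∀ t ∈ Icc a b, f t = H₁ t - H₂ t := by
  obtain ⟨p, q, hp, hq, hpq⟩ := exists_monotone_sub_of_derivVariation_ne_top h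
  have hi : ∀ {g : ℝ → ℝ}, Monotone g → ∀ u v, IntervalIntegrable g MeasureTheory.volume u v :=
    fun hg u v => hg.intervalIntegrable
  set I : (ℝ → ℝ) → ℝ → ℝ := fun g t => ∫ x in a..t, g x with hI
  have hsub : ∀ {g : ℝ → ℝ}, Monotone g → ∀ s t, g t * (s - t) ≤ I g s - I g t := by
    intro g hg s t
    simp only [hI]
    rw [intervalIntegral.integral_interval_sub_left (hi hg _ _) (hi hg _ _)]
    exact hg.mul_sub_le_integral s t
  have hftc : ∀ t ∈ Icc a b, f t = f a + I p t - I q t := by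
    intro t ht
    have h1 := (hf.lipschitzOnWith (s := uIcc a t)).absolutelyContinuousOnInterval
      |>.integral_deriv_eq_sub
    have h2 : ∫ x in a..t, deriv f x = ∫ x in a..t, (p x - q x) := by
      refine intervalIntegral.integral_congr_ae ?_
      filter_upwards [hf.ae_differentiableAt_real] with x hx hxt
      rw [uIoc_of_le ht.1] at hxt
      exact hpq x ⟨hxt.1.le, hxt.2.trans ht.2⟩ hx
    rw [intervalIntegral.integral_sub (hi hp _ _) (hi hq _ _)] at h2
    simp only [hI]
    linarith
  -- Lower bounds on `[a, b]` come from the tangent line at `a`.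
  have hlow : ∀ {g : ℝ → ℝ}, Monotone g → ∀ t ∈ Icc a b, -(|g a| * (b - a)) ≤ I g t := by
    intro g hg t ht
    have h1 := hsub hg t a
    have h2 : I g a = 0 := intervalIntegral.integral_same
    have h3 := neg_abs_le (g a * (t - a))
    rw [abs_mul, abs_of_nonneg (sub_nonneg.2 ht.1)] at h3
    have h4 := mul_le_mul_of_nonneg_left (sub_le_sub_right ht.2 a) (abs_nonneg (g a))
    linarith
  set C := |f a| + |p a| * (b - a) + |q a| * (b - a) with hC
  refine ⟨p, q, fun t => f a + I p t + C, fun t => I q t + C, hp, hq, fun s t => ?_, fun s t => ?_,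
    fun t ht => ?_, fun t ht => ?_, fun t ht => ?_⟩
  · linarith [hsub hp s t]
  · linarith [hsub hq s t]
  all_goals
    have hab : 0 ≤ b - a := by linarith [ht.1, ht.2]
    have := hlow hp t ht
    have := hlow hq t ht
    have := neg_abs_le (f a)
    have := abs_nonneg (f a)
    have := mul_nonneg (abs_nonneg (p a)) hab
    have := mul_nonneg (abs_nonneg (q a)) hab
    have := hftc t ht
    simp only
    linarith

/-! ### Convex extension of a homogeneous function from a half-plane -/

/-- The sinusoid tangent at `0` to a nonnegative convex function lies below it up to distance `π`.
Here `h` and `m` are the value and slope at `0`, and `k` the value at `d`. -/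
lemma tangent_sinusoid_le {h k m d : ℝ} (hh : 0 ≤ h) (hk : 0 ≤ k) (hd : |d| ≤ Real.pi)
    (hm : m * d ≤ k - h) : h * Real.cos d + m * Real.sin d ≤ k := by
  wlog hd0 : 0 ≤ d generalizing d m
  · have := this (d := -d) (m := -m) (by rwa [abs_neg]) (by linarith) (by linarith)
    rw [Real.cos_neg, Real.sin_neg] at this
    linarith
  rw [abs_of_nonneg hd0] at hd
  have h1 := Real.sin_le hd0
  have h2 := Real.sin_nonneg_of_nonneg_of_le_pi hd0 hd
  have h3 := Real.cos_le_one d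
  have h4 : d * Real.cos d ≤ Real.sin d := by
    rcases lt_or_ge d (Real.pi / 2) with hlt | hge
    · have hc : 0 < Real.cos d := Real.cos_pos_of_mem_Ioo ⟨by linarith [Real.pi_pos], hlt⟩
      have := Real.le_tan hd0 hlt
      rwa [Real.tan_eq_sin_div_cos, le_div_iff₀ hc] at this
    · have := Real.cos_nonpos_of_pi_div_two_le_of_le hge (by linarith [Real.pi_pos])
      nlinarith
  rcases le_or_gt 0 m with hm0 | hm0
  · nlinarith
  rcases le_or_gt 0 (h + m * d) with hs | hs
  · nlinarith [mul_nonneg hs (sub_nonneg.2 h3), mul_nonneg_of_nonpos_of_nonpos hm0.le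
      (sub_nonpos.2 h4)]
  · have hd1 : 0 < d := by
      rcases hd0.eq_or_lt with rfl | h
      · linarith
      · exact h
    have : d * (h * Real.cos d + m * Real.sin d) ≤ 0 := by nlinarith
    linarith [nonpos_of_mul_nonpos_right this hd1]

/-- A nonnegative convex function `H` of the angle on `[α, α + π]`, with slopes `g`, yields a convex
function on the plane equal to `r * H s` at polar coordinates `(r, s)`, as the supremum of the
linear functions tangent to the latter. -/
lemma exists_convexOn_extension {g H : ℝ → ℝ} (hg : Monotone g) (α : ℝ)
    (htan : ∀ s t, g t * (s - t) ≤ H s - H t) (hH : ∀ t ∈ Icc α (α + Real.pi), 0 ≤ H t) :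
    ∃ (F : E₂ → ℝ) (K : ℝ), ConvexOn ℝ univ F ∧
      (∀ x y, F x ≤ F y + K * (|x 0 - y 0| + |x 1 - y 1|)) ∧
      ∀ r, 0 ≤ r → ∀ s ∈ Icc α (α + Real.pi), F (r • circlePt s) = r * H s := by
  set u : ℝ → ℝ := fun t => H t * Real.cos t - g t * Real.sin t with hu
  set v : ℝ → ℝ := fun t => H t * Real.sin t + g t * Real.cos t with hv
  set ℓ : Icc α (α + Real.pi) → E₂ → ℝ := fun t x => u t * x 0 + v t * x 1 with hℓ
  have hπ := Real.pi_pos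
  have : Nonempty (Icc α (α + Real.pi)) := ⟨⟨α, le_rfl, by linarith⟩⟩
  set G := |g α| + |g (α + Real.pi)| with hG
  set K := H α + G * Real.pi + G with hK
  have hGb : ∀ t ∈ Icc α (α + Real.pi), |g t| ≤ G := fun t ht => by
    have h1 := hg ht.1
    have h2 := hg ht.2
    rw [hG, abs_le]
    constructor <;> linarith [neg_abs_le (g α), le_abs_self (g (α + Real.pi)), abs_nonneg (g α),
      abs_nonneg (g (α + Real.pi))]
  have hHb : ∀ t ∈ Icc α (α + Real.pi), |H t| ≤ H α + G * Real.pi := fun t ht => by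
    rw [abs_of_nonneg (hH t ht)]
    have h1 := htan α t
    have h2 : g t * (t - α) ≤ G * Real.pi :=
      mul_le_mul ((le_abs_self _).trans (hGb t ht)) (by linarith [ht.2]) (by linarith [ht.1])
        ((abs_nonneg _).trans (hGb t ht))
    linarith
  have habs : ∀ x y c s : ℝ, |c| ≤ 1 → |s| ≤ 1 → |x * c + y * s| ≤ |x| + |y| := by
    intro x y c s hc hs
    refine (abs_add_le _ _).trans ?_
    rw [abs_mul, abs_mul]
    nlinarith [abs_nonneg x, abs_nonneg y]
  have hub : ∀ t ∈ Icc α (α + Real.pi), |u t| ≤ K := fun t ht => by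
    have := habs (H t) (g t) (Real.cos t) (-Real.sin t) (Real.abs_cos_le_one t)
      (by rw [abs_neg]; exact Real.abs_sin_le_one t)
    rw [show u t = H t * Real.cos t + g t * -Real.sin t by simp only [hu]; ring]
    linarith [hGb t ht, hHb t ht]
  have hvb : ∀ t ∈ Icc α (α + Real.pi), |v t| ≤ K := fun t ht => by
    have := habs (H t) (g t) (Real.sin t) (Real.cos t) (Real.abs_sin_le_one t)
      (Real.abs_cos_le_one t)
    linarith [hGb t ht, hHb t ht]
  have hlip : ∀ t x y, ℓ t x ≤ ℓ t y + K * (|x 0 - y 0| + |x 1 - y 1|) := by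
    intro t x y
    have h1 := (le_abs_self _).trans_eq (abs_mul (u t) (x 0 - y 0))
    have h2 := (le_abs_self _).trans_eq (abs_mul (v t) (x 1 - y 1))
    have h3 := mul_le_mul_of_nonneg_right (hub t t.2) (abs_nonneg (x 0 - y 0))
    have h4 := mul_le_mul_of_nonneg_right (hvb t t.2) (abs_nonneg (x 1 - y 1))
    simp only [hℓ]
    linarith
  have hbdd : ∀ x, BddAbove (range fun t => ℓ t x) := fun x => by
    refine ⟨K * (|x 0| + |x 1|), ?_⟩
    rintro _ ⟨t, rfl⟩
    have := hlip t x 0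
    simpa [hℓ] using this
  refine ⟨fun x => ⨆ t, ℓ t x, K, ⟨convex_univ, ?_⟩, ?_, ?_⟩
  · intro x _ y _ a b ha hb _
    refine ciSup_le fun t => ?_
    have h1 := mul_le_mul_of_nonneg_left (le_ciSup (hbdd x) t) ha
    have h2 := mul_le_mul_of_nonneg_left (le_ciSup (hbdd y) t) hb
    have h3 : ℓ t (a • x + b • y) = a * ℓ t x + b * ℓ t y := by
      simp only [hℓ, PiLp.add_apply, PiLp.smul_apply, smul_eq_mul]
      ring
    rw [h3]
    exact add_le_add h1 h2
  · intro x y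
    refine ciSup_le fun t => (hlip t x y).trans ?_
    gcongr
    exact le_ciSup (hbdd y) t
  · intro r hr s hs
    have hval : ∀ t, ℓ t (r • circlePt s)
        = r * (H t * Real.cos (s - t) + g t * Real.sin (s - t)) := by
      intro t
      simp only [hℓ, hu, hv, PiLp.smul_apply, circlePt_zero, circlePt_one, smul_eq_mul,
        Real.cos_sub, Real.sin_sub]
      ring
    apply le_antisymm
    · refine ciSup_le fun t => ?_
      rw [hval]
      have htd : |s - (t : ℝ)| ≤ Real.pi := by
        rw [abs_le]
        constructor <;> linarith [hs.1, hs.2, t.2.1, t.2.2]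
      exact mul_le_mul_of_nonneg_left
        (tangent_sinusoid_le (hH t t.2) (hH s hs) htd (htan s t)) hr
    · refine le_trans (le_of_eq ?_) (le_ciSup (hbdd _) ⟨s, hs⟩)
      simp [hval]

/-! ### Gluing the two half-planes -/

/-- When the four numbers are values of convex functions, both terms on the right are values of
convex functions too: differences of convex functions are closed under minima. -/
lemma min_sub_eq_sub_max (a₁ a₂ b₁ b₂ : ℝ) :
    min (a₁ - a₂) (b₁ - b₂) = (a₁ + b₁) - max (a₂ + b₁) (b₂ + a₁) := by
  rcases le_total (a₁ - a₂) (b₁ - b₂) with h | h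
  · rw [min_eq_left h, max_eq_left (by linarith)]
    ring
  · rw [min_eq_right h, max_eq_right (by linarith)]
    ring

lemma convexOn_mul_max_coord {K : ℝ} (hK : 0 ≤ K) (c : ℝ) :
    ConvexOn ℝ univ (fun x : E₂ => K * max (c * x 1) 0) := by
  refine ConvexOn.smul hK (ConvexOn.sup ⟨convex_univ, fun x _ y _ a b _ _ _ => le_of_eq ?_⟩
    (convexOn_const 0 convex_univ))
  simp only [PiLp.add_apply, PiLp.smul_apply, smul_eq_mul]
  ring

/-- A function is a difference of convex functions on the plane as soon as it agrees with one,
having Lipschitz terms, on each of the two closed half-planes. -/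
lemma exists_convexOn_sub_of_halfPlanes {φ F₁ F₂ F₃ F₄ : E₂ → ℝ} {K₁ K₂ K₃ K₄ : ℝ}
    (h₁ : ConvexOn ℝ univ F₁) (h₂ : ConvexOn ℝ univ F₂) (h₃ : ConvexOn ℝ univ F₃)
    (h₄ : ConvexOn ℝ univ F₄)
    (l₁ : ∀ x y, F₁ x ≤ F₁ y + K₁ * (|x 0 - y 0| + |x 1 - y 1|))
    (l₂ : ∀ x y, F₂ x ≤ F₂ y + K₂ * (|x 0 - y 0| + |x 1 - y 1|))
    (l₃ : ∀ x y, F₃ x ≤ F₃ y + K₃ * (|x 0 - y 0| + |x 1 - y 1|))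
    (l₄ : ∀ x y, F₄ x ≤ F₄ y + K₄ * (|x 0 - y 0| + |x 1 - y 1|))
    (hup : ∀ x : E₂, 0 ≤ x 1 → φ x = F₁ x - F₂ x)
    (hlow : ∀ x : E₂, x 1 ≤ 0 → φ x = F₃ x - F₄ x) :
    ∃ f₁ f₂ : E₂ → ℝ, ConvexOn ℝ univ f₁ ∧ ConvexOn ℝ univ f₂ ∧ φ = f₁ - f₂ := by
  set M := |K₁| + |K₂| + |K₃| + |K₄| with hM
  have hM0 : 0 ≤ M := by positivity
  -- The penalties vanish on one half-plane and make the respective term inactive on the other.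
  have hA := h₁.add (convexOn_mul_max_coord hM0 (-1))
  have hB := h₃.add (convexOn_mul_max_coord hM0 1)
  refine ⟨_, _, hA.add hB, (h₂.add hB).sup (h₄.add hA), ?_⟩
  funext x
  simp only [Pi.sub_apply, Pi.add_apply, Pi.sup_apply, neg_mul, one_mul]
  rw [← min_sub_eq_sub_max]
  -- The two representations agree at the projection of `x` to the common axis.
  set y : E₂ := !₂[x 0, 0] with hy
  have hy0 : y 0 = x 0 := rfl
  have hy1 : y 1 = 0 := rfl
  have hyu := hup y hy1.ge
  have hyl := hlow y hy1.le
  have e : |x 0 - y 0| + |x 1 - y 1| = |x 1| := by rw [hy0, hy1]; simp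
  have e' : |y 0 - x 0| + |y 1 - x 1| = |x 1| := by rw [hy0, hy1]; simp
  have a₁ := l₁ x y
  have b₁ := l₁ y x
  have a₂ := l₂ x y
  have b₂ := l₂ y x
  have a₃ := l₃ x y
  have b₃ := l₃ y x
  have a₄ := l₄ x y
  have b₄ := l₄ y x
  rw [e] at a₁ a₂ a₃ a₄
  rw [e'] at b₁ b₂ b₃ b₄
  have k : ∀ K : ℝ, K * |x 1| ≤ |K| * |x 1| := fun K =>
    mul_le_mul_of_nonneg_right (le_abs_self K) (abs_nonneg _)
  have k₁ := k K₁
  have k₂ := k K₂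
  have k₃ := k K₃
  have k₄ := k K₄
  have hMx : M * |x 1| = |K₁| * |x 1| + |K₂| * |x 1| + |K₃| * |x 1| + |K₄| * |x 1| := by
    rw [hM]; ring
  rcases le_total 0 (x 1) with hx | hx
  · have hφ := hup x hx
    rw [max_eq_right (neg_nonpos.2 hx), max_eq_left hx]
    rw [abs_of_nonneg hx] at *
    rw [min_eq_left (by linarith)]
    linarith
  · have hφ := hlow x hx
    rw [max_eq_left (neg_nonneg.2 hx), max_eq_right hx]
    rw [abs_of_nonpos hx] at *
    rw [min_eq_right (by linarith)]
    linarith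

/-- a Lipschitz, positively homogeneous (degree 1) function `φ : ℝ² → ℝ` is a
difference of convex functions iff the variation of `Φ'` on `[0, 2π]` is bounded, where
`Φ(t) = φ(cos t, sin t)`. -/
theorem dc_iff_bounded_derivVariation_of_posHomog_one
    (φ : EuclideanSpace ℝ (Fin 2) → ℝ) (L : ℝ≥0) (hlip : LipschitzWith L φ)
    (hhom : ∀ l : ℝ, 0 < l → ∀ q, φ (l • q) = l * φ q) :
    (∃ f₁ f₂ : EuclideanSpace ℝ (Fin 2) → ℝ,
        ConvexOn ℝ Set.univ f₁ ∧ ConvexOn ℝ Set.univ f₂ ∧ φ = f₁ - f₂) ↔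
      (∃ c : ℝ, 0 < c ∧
        derivVariation (fun t => φ (circlePt t)) 0 (2 * Real.pi) < ENNReal.ofReal c) := by
  constructor
  · rintro ⟨f₁, f₂, h₁, h₂, hφ⟩
    obtain ⟨K₁, hK₁⟩ := exists_convexOn_circlePt_add_sq h₁
    obtain ⟨K₂, hK₂⟩ := exists_convexOn_circlePt_add_sq h₂
    obtain ⟨c, hc, hle⟩ := derivVariation_le_of_convexOn_sub
      (f := fun t => φ (circlePt t)) (hK₁ _ (le_max_left K₁ K₂)) (hK₂ _ (le_max_right K₁ K₂))
      (by funext t; simp [hφ]) 0 (2 * Real.pi)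
    refine ⟨c + 1, by linarith, hle.trans_lt ?_⟩
    exact (ENNReal.ofReal_lt_ofReal_iff (by linarith)).2 (by linarith)
  · rintro ⟨c, -, hc⟩
    have hπ := Real.pi_pos
    have hΦ : LipschitzWith (L * 2) (fun t => φ (circlePt t)) := hlip.comp lipschitzWith_circlePt
    obtain ⟨p₁, p₂, H₁, H₂, hp₁, hp₂, ht₁, ht₂, hn₁, hn₂, hsub⟩ :=
      exists_sub_of_derivVariation_ne_top hΦ (hc.trans_le le_top).ne
    have hU : Icc 0 (0 + Real.pi) ⊆ Icc 0 (2 * Real.pi) := Icc_subset_Icc le_rfl (by linarith)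
    have hD : Icc Real.pi (Real.pi + Real.pi) ⊆ Icc 0 (2 * Real.pi) :=
      Icc_subset_Icc hπ.le (by linarith)
    obtain ⟨F₁, K₁, c₁, l₁, e₁⟩ :=
      exists_convexOn_extension hp₁ 0 ht₁ fun t ht => hn₁ t (hU ht)
    obtain ⟨F₂, K₂, c₂, l₂, e₂⟩ :=
      exists_convexOn_extension hp₂ 0 ht₂ fun t ht => hn₂ t (hU ht)
    obtain ⟨F₃, K₃, c₃, l₃, e₃⟩ :=
      exists_convexOn_extension hp₁ Real.pi ht₁ fun t ht => hn₁ t (hD ht)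
    obtain ⟨F₄, K₄, c₄, l₄, e₄⟩ :=
      exists_convexOn_extension hp₂ Real.pi ht₂ fun t ht => hn₂ t (hD ht)
    -- Homogeneity with factor `2` forces `φ 0 = 0`, so factor `0` is allowed as well.
    have hhom0 : ∀ r : ℝ, 0 ≤ r → ∀ q, φ (r • q) = r * φ q := by
      intro r hr q
      rcases hr.eq_or_lt with rfl | hr
      · have := hhom 2 two_pos 0
        rw [smul_zero] at this
        rw [zero_smul, zero_mul]
        linarith
      · exact hhom r hr q
    refine exists_convexOn_sub_of_halfPlanes c₁ c₂ c₃ c₄ l₁ l₂ l₃ l₄ (fun x hx => ?_) fun x hx => ?_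
    · obtain ⟨r, hr, s, hs, rfl⟩ := exists_polar_of_nonneg x hx
      have hs' : s ∈ Icc 0 (0 + Real.pi) := by rwa [zero_add]
      have hv : φ (circlePt s) = H₁ s - H₂ s := hsub s (hU hs')
      rw [hhom0 r hr, e₁ r hr s hs', e₂ r hr s hs', hv]
      ring
    · obtain ⟨r, hr, s, hs, rfl⟩ := exists_polar_of_nonpos x hx
      have hv : φ (circlePt s) = H₁ s - H₂ s := hsub s (hD hs)
      rw [hhom0 r hr, e₃ r hr s hs, e₄ r hr s hs, hv]
      ring
end
end

section
/- Let m be a positive integer and let φ : ℝ² → ℝ be positively homogeneous of degree m, Lipschitz on the closed unit ball, and representable as a difference of two convex functions. Then φ is representable as a difference of two convex functions that are themselves positively homogeneous of degree m: there exist convex φ₁, φ₂ : ℝ² → ℝ with φᵢ(λ q) = λᵐ φᵢ(q) for all λ > 0 (i = 1, 2) and φ = φ₁ − φ₂. -/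
/-!
The degree-`m` homogeneous DC functions form a vector space, and the proof writes `φ` as a
combination of elementary members of it.

* **Folding.** Write `x⁺ = max x 0`. If `φ 0 = 0`, then
  `φ(x, y) = ∑_{σ, τ = ±1} φ(σ(σx)⁺, τ(τy)⁺) - φ(x, 0) - φ(0, y)`, because a folded point lies
  on an axis for every quadrant except the one containing `(x, y)`. Moreover
  `φ(x, 0) = φ(x⁺, 0) + φ(-(-x)⁺, 0)`, so every term has the form
  `φ(σ(σx)⁺, τ(τy)⁺)` with `σ, τ ∈ {-1, 0, 1}` (`fold_identity`).
* **One folded term.** Put `x' = (σx)⁺`, `y' = (τy)⁺`, `s = x' + y'`. By homogeneity the term is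
  `s ^ m * (g₁(x'/s) - g₂(x'/s))`, with `gᵢ` the restriction of `fᵢ` to the segment from `(0, τ)`
  to `(σ, 0)`. The perspective `aᵢ = s * (gᵢ(x'/s) + C)` is sublinear in `(x', y')` on the closed
  quadrant, and for large `C` it is also monotone there (`persp_mono_left`, `persp_mono_right`).
  Hence it stays convex after composition with the positive parts (`persp_fold`), and the
  term is `s ^ (m-1) * a₁ - s ^ (m-1) * a₂`.
* **Products.** For nonnegative sublinear `s, a` the product `s ^ (m-1) * a` is, by Lagrange
  interpolation in `t` of the polynomial `(s + t a) ^ m`, a fixed linear combination of the convex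
  functions `(s + i a) ^ m`, `0 ≤ i ≤ m` (`HomogDC.pow_mul`).
-/

open Set
open scoped NNReal

noncomputable section

/-- The function `ψ` is a difference of two convex functions on the plane that are both
positively homogeneous of degree `m`. -/
def HomogDC (m : ℕ) (ψ : EuclideanSpace ℝ (Fin 2) → ℝ) : Prop :=
  ∃ u w : EuclideanSpace ℝ (Fin 2) → ℝ,
    ConvexOn ℝ Set.univ u ∧ ConvexOn ℝ Set.univ w ∧
    (∀ l : ℝ, 0 < l → ∀ q, u (l • q) = l ^ m * u q) ∧
    (∀ l : ℝ, 0 < l → ∀ q, w (l • q) = l ^ m * w q) ∧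
    ψ = u - w

/-- A nonnegative sublinear function on the plane: subadditive and positively homogeneous of
degree one. -/
structure NonnegSublinear (a : EuclideanSpace ℝ (Fin 2) → ℝ) : Prop where
  nonneg : ∀ q, 0 ≤ a q
  add_le : ∀ p q, a (p + q) ≤ a p + a q
  hom : ∀ l : ℝ, 0 < l → ∀ q, a (l • q) = l * a q

/-! ### Vector space operations on homogeneous DC functions -/

namespace HomogDC

variable {m : ℕ} {ψ χ : EuclideanSpace ℝ (Fin 2) → ℝ}

theorem neg (h : HomogDC m ψ) : HomogDC m (-ψ) := by
  obtain ⟨u, w, hu, hw, hu', hw', rfl⟩ := h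
  exact ⟨w, u, hw, hu, hw', hu', by simp⟩

theorem add (h : HomogDC m ψ) (h' : HomogDC m χ) : HomogDC m (ψ + χ) := by
  obtain ⟨u, w, hu, hw, hu', hw', rfl⟩ := h
  obtain ⟨u₂, w₂, hu₂, hw₂, hu₂', hw₂', rfl⟩ := h'
  refine ⟨u + u₂, w + w₂, hu.add hu₂, hw.add hw₂, ?_, ?_, by abel⟩
  · intro l hl q
    simp only [Pi.add_apply, hu' l hl, hu₂' l hl, mul_add]
  · intro l hl q
    simp only [Pi.add_apply, hw' l hl, hw₂' l hl, mul_add]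

theorem sub (h : HomogDC m ψ) (h' : HomogDC m χ) : HomogDC m (ψ - χ) := by
  rw [sub_eq_add_neg]
  exact h.add h'.neg

theorem zero : HomogDC m 0 :=
  ⟨0, 0, convexOn_const 0 convex_univ, convexOn_const 0 convex_univ, by simp, by simp, by simp⟩

theorem smul_of_nonneg (h : HomogDC m ψ) {c : ℝ} (hc : 0 ≤ c) : HomogDC m (c • ψ) := by
  obtain ⟨u, w, hu, hw, hu', hw', rfl⟩ := h
  refine ⟨c • u, c • w, hu.smul hc, hw.smul hc, ?_, ?_, by rw [smul_sub]⟩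
  · intro l hl q
    simp only [Pi.smul_apply, smul_eq_mul, hu' l hl]
    ring
  · intro l hl q
    simp only [Pi.smul_apply, smul_eq_mul, hw' l hl]
    ring

theorem smul (h : HomogDC m ψ) (c : ℝ) : HomogDC m (c • ψ) := by
  rcases le_total 0 c with hc | hc
  · exact h.smul_of_nonneg hc
  · have := (h.smul_of_nonneg (neg_nonneg.2 hc)).neg
    simpa using this

theorem sum {ι : Type*} (s : Finset ι) (f : ι → EuclideanSpace ℝ (Fin 2) → ℝ)
    (h : ∀ i ∈ s, HomogDC m (f i)) : HomogDC m (∑ i ∈ s, f i) :=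
  Finset.sum_induction f (HomogDC m) (fun _ _ => add) zero h

end HomogDC

/-! ### Products of nonnegative sublinear functions -/

namespace NonnegSublinear

variable {a b : EuclideanSpace ℝ (Fin 2) → ℝ}

theorem add_smul (ha : NonnegSublinear a) (hb : NonnegSublinear b) {c : ℝ} (hc : 0 ≤ c) :
    NonnegSublinear (a + c • b) where
  nonneg q := add_nonneg (ha.nonneg q) (mul_nonneg hc (hb.nonneg q))
  add_le p q := by
    have h1 := ha.add_le p q
    have h2 := mul_le_mul_of_nonneg_left (hb.add_le p q) hc
    simp only [Pi.add_apply, Pi.smul_apply, smul_eq_mul]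
    linarith
  hom l hl q := by
    simp only [Pi.add_apply, Pi.smul_apply, smul_eq_mul, ha.hom l hl, hb.hom l hl]
    ring

theorem convexOn (ha : NonnegSublinear a) : ConvexOn ℝ Set.univ a := by
  rw [convexOn_iff_forall_pos]
  refine ⟨convex_univ, fun x _ y _ s t hs ht _ => ?_⟩
  have h := ha.add_le (s • x) (t • y)
  rwa [ha.hom s hs, ha.hom t ht] at h

theorem homogDC_pow (ha : NonnegSublinear a) (m : ℕ) : HomogDC m (a ^ m) := by
  refine ⟨a ^ m, 0, ha.convexOn.pow (fun x _ => ha.nonneg x) m,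
    convexOn_const 0 convex_univ, ?_, by simp, by simp⟩
  intro l hl q
  simp only [Pi.pow_apply, ha.hom l hl, mul_pow]

end NonnegSublinear

/-- Reading off the derivative at `t = 0` from the values at `t = 0, …, k + 1` of a polynomial of
degree at most `k + 1`, applied to `(s + t a) ^ (k + 1)`. The weights depend on `k` only. -/
theorem exists_weights (k : ℕ) : ∃ c : ℕ → ℝ, ∀ s a : ℝ,
    s ^ k * a = ∑ i ∈ Finset.range (k + 2), c i * (s + i * a) ^ (k + 1) := by
  let B : ℕ → Polynomial ℝ :=
    Lagrange.basis (Finset.range (k + 2)) (fun i : ℕ => (i : ℝ))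
  refine ⟨fun i => ((k : ℝ) + 1)⁻¹ * (Polynomial.derivative (B i)).eval 0, fun s a => ?_⟩
  let p : Polynomial ℝ := (Polynomial.C s + Polynomial.C a * Polynomial.X) ^ (k + 1)
  have hdeg : p.degree < ((Finset.range (k + 2)).card : WithBot ℕ) := by
    have h1 : (Polynomial.C s + Polynomial.C a * Polynomial.X).degree ≤ 1 := by compute_degree
    have h2 : p.degree ≤ (k + 1 : ℕ) • (1 : WithBot ℕ) :=
      (Polynomial.degree_pow_le_of_le _ h1).trans (by simp)
    refine h2.trans_lt ?_
    rw [Finset.card_range, nsmul_one]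
    exact_mod_cast Nat.lt_succ_self (k + 1)
  have hinj : Set.InjOn (fun i : ℕ => (i : ℝ)) (Finset.range (k + 2)) :=
    Nat.cast_injective.injOn
  have h := Lagrange.eq_interpolate hinj hdeg
  have h' := congrArg (fun r => (Polynomial.derivative r).eval 0) h
  have hk : (k : ℝ) + 1 ≠ 0 := by positivity
  simp only [Lagrange.interpolate_apply, Polynomial.derivative_sum, Polynomial.eval_finsetSum,
    Polynomial.derivative_C_mul, Polynomial.eval_mul, Polynomial.eval_C] at h'
  have hL : (Polynomial.derivative p).eval 0 = ((k : ℝ) + 1) * (s ^ k * a) := by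
    simp [p, Polynomial.derivative_pow]
    ring
  rw [hL] at h'
  calc s ^ k * a = ((k : ℝ) + 1)⁻¹ * (((k : ℝ) + 1) * (s ^ k * a)) := by field_simp
    _ = _ := by
      rw [h', Finset.mul_sum]
      refine Finset.sum_congr rfl fun i _ => ?_
      simp [p, B]
      ring

theorem HomogDC.pow_mul {s a : EuclideanSpace ℝ (Fin 2) → ℝ} (hs : NonnegSublinear s)
    (ha : NonnegSublinear a) (k : ℕ) : HomogDC (k + 1) (s ^ k * a) := by
  obtain ⟨c, hc⟩ := exists_weights k
  have : s ^ k * a = ∑ i ∈ Finset.range (k + 2), c i • (s + (i : ℝ) • a) ^ (k + 1) := by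
    ext q
    simp [hc]
  rw [this]
  exact HomogDC.sum _ _ fun i _ =>
    ((hs.add_smul ha (Nat.cast_nonneg i)).homogDC_pow (k + 1)).smul (c i)

/-! ### Perspectives on the closed quadrant -/

/-- The perspective `(x + y) g(x / (x + y))`; it takes the value `0` at the origin. -/
def persp (g : ℝ → ℝ) (x y : ℝ) : ℝ := (x + y) * g (x / (x + y))

theorem persp_hom (g : ℝ → ℝ) {l : ℝ} (hl : 0 < l) (x y : ℝ) :
    persp g (l * x) (l * y) = l * persp g x y := by
  unfold persp
  rw [← mul_add, mul_div_mul_left _ _ hl.ne', mul_assoc]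

theorem persp_add_le {g : ℝ → ℝ} (hg : ConvexOn ℝ Set.univ g) {x y x' y' : ℝ}
    (hx : 0 ≤ x) (hy : 0 ≤ y) (hx' : 0 ≤ x') (hy' : 0 ≤ y') :
    persp g (x + x') (y + y') ≤ persp g x y + persp g x' y' := by
  rcases (add_nonneg hx hy).eq_or_lt with h | h
  · obtain rfl : x = 0 := by linarith
    obtain rfl : y = 0 := by linarith
    simp [persp]
  rcases (add_nonneg hx' hy').eq_or_lt with h' | h'
  · obtain rfl : x' = 0 := by linarith
    obtain rfl : y' = 0 := by linarith
    simp [persp]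
  have hS : 0 < (x + y) + (x' + y') := add_pos h h'
  have key := hg.2 (mem_univ (x / (x + y))) (mem_univ (x' / (x' + y')))
    (div_nonneg h.le hS.le) (div_nonneg h'.le hS.le) (by field_simp)
  simp only [smul_eq_mul] at key
  have e : (x + y) / (x + y + (x' + y')) * (x / (x + y)) +
      (x' + y') / (x + y + (x' + y')) * (x' / (x' + y')) = (x + x') / (x + y + (x' + y')) := by
    field_simp
  rw [e] at key
  have := mul_le_mul_of_nonneg_left key hS.le
  unfold persp
  rw [show x + x' + (y + y') = x + y + (x' + y') by ring]
  refine this.trans (le_of_eq ?_)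
  field_simp

theorem persp_comm (g : ℝ → ℝ) {x y : ℝ} (hx : 0 ≤ x) (hy : 0 ≤ y) :
    persp g x y = persp (fun t => g (1 - t)) y x := by
  unfold persp
  rcases (add_nonneg hx hy).eq_or_lt with h | h
  · rw [← h, add_comm y x, ← h]
    simp
  · rw [add_comm y x]
    congr 2
    field_simp
    ring

/-- The perspective dominates its value on the edge `x = 0` once `g` has been shifted up enough:
convexity on the nodes `-1 < 0 ≤ t` gives `g t ≥ g 0 + t * (g 0 - g (-1))`. -/
theorem persp_edge_le {g : ℝ → ℝ} (hg : ConvexOn ℝ Set.univ g) {C : ℝ}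
    (hC : g (-1) - 2 * g 0 ≤ C) {x y : ℝ} (hx : 0 ≤ x) (hy : 0 ≤ y) :
    persp (fun t => g t + C) 0 y ≤ persp (fun t => g t + C) x y := by
  rcases (add_nonneg hx hy).eq_or_lt with h | h
  · obtain rfl : x = 0 := by linarith
    exact le_rfl
  have ht : 0 ≤ x / (x + y) := div_nonneg hx h.le
  have key := hg.2 (mem_univ (x / (x + y))) (mem_univ (-1))
    (show 0 ≤ 1 / (1 + x / (x + y)) by positivity)
    (show 0 ≤ (x / (x + y)) / (1 + x / (x + y)) by positivity)
    (by rw [← add_div, div_self (by positivity)])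
  simp only [smul_eq_mul] at key
  have hx1 : (x + y) * (x / (x + y)) = x := by field_simp
  set t := x / (x + y) with htdef
  have e : 1 / (1 + t) * t + t / (1 + t) * -1 = 0 := by field_simp; ring
  rw [e] at key
  have key2 : (1 + t) * g 0 ≤ g t + t * g (-1) := by
    have := mul_le_mul_of_nonneg_left key (show 0 ≤ 1 + t by positivity)
    refine this.trans (le_of_eq ?_)
    field_simp
  have key3 := mul_le_mul_of_nonneg_left key2 h.le
  have key4 : (x + y + x) * g 0 ≤ (x + y) * g t + x * g (-1) := by
    calc (x + y + x) * g 0 = (x + y) * ((1 + t) * g 0) := by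
          rw [← mul_assoc, mul_add, hx1, mul_one]
      _ ≤ _ := key3
      _ = _ := by rw [mul_add, ← mul_assoc, hx1]
  have h5 := mul_le_mul_of_nonneg_left hC hx
  simp only [persp, zero_div, ← htdef, zero_add]
  nlinarith

/-- A sublinear function on the quadrant which is minimal on the edge `x = 0` of each horizontal
line is monotone in `x`. -/
theorem persp_mono_left {g : ℝ → ℝ} (hg : ConvexOn ℝ Set.univ g) {C : ℝ}
    (hC : g (-1) - 2 * g 0 ≤ C) {x x' y : ℝ} (hx : 0 ≤ x) (hxx' : x ≤ x') (hy : 0 ≤ y) :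
    persp (fun t => g t + C) x y ≤ persp (fun t => g t + C) x' y := by
  rcases hx.eq_or_lt with rfl | hx
  · exact persp_edge_le hg hC hxx' hy
  rcases hxx'.eq_or_lt with rfl | hlt
  · exact le_rfl
  have hx' : 0 < x' := hx.trans hlt
  have hl : 0 < x / x' := div_pos hx hx'
  have hl' : 0 < 1 - x / x' := by rw [sub_pos, div_lt_one hx']; exact hlt
  have hgC : ConvexOn ℝ Set.univ (fun t => g t + C) := hg.add_const C
  have h := persp_add_le hgC (x := x / x' * x') (y := x / x' * y) (x' := (1 - x / x') * 0)
    (y' := (1 - x / x') * y) (by positivity) (by positivity) (by simp) (by positivity)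
  rw [persp_hom _ hl, persp_hom _ hl'] at h
  have e1 : x / x' * x' + (1 - x / x') * 0 = x := by field_simp; ring
  have e2 : x / x' * y + (1 - x / x') * y = y := by ring
  rw [e1, e2] at h
  have := mul_le_mul_of_nonneg_left (persp_edge_le hg hC hx'.le hy) hl'.le
  linarith

theorem convexOn_reflect {g : ℝ → ℝ} (hg : ConvexOn ℝ Set.univ g) :
    ConvexOn ℝ Set.univ (fun t => g (1 - t)) := by
  refine ⟨convex_univ, fun x _ y _ a b ha hb hab => ?_⟩
  have := hg.2 (mem_univ (1 - x)) (mem_univ (1 - y)) ha hb hab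
  simp only [smul_eq_mul] at this ⊢
  rwa [show 1 - (a * x + b * y) = a * (1 - x) + b * (1 - y) by linear_combination -hab]

theorem persp_mono_right {g : ℝ → ℝ} (hg : ConvexOn ℝ Set.univ g) {C : ℝ}
    (hC : g 2 - 2 * g 1 ≤ C) {x y y' : ℝ} (hx : 0 ≤ x) (hy : 0 ≤ y) (hyy' : y ≤ y') :
    persp (fun t => g t + C) x y ≤ persp (fun t => g t + C) x y' := by
  rw [persp_comm _ hx hy, persp_comm _ hx (hy.trans hyy')]
  refine persp_mono_left (convexOn_reflect hg) ?_ hy hyy' hx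
  norm_num
  linarith

/-- Sublinearity and monotonicity of the shifted perspective on the quadrant survive
composition with the convex functions `(σx)⁺` and `(τy)⁺`. -/
theorem persp_fold {g : ℝ → ℝ} (hg : ConvexOn ℝ Set.univ g) {C : ℝ}
    (hC : g (-1) - 2 * g 0 ≤ C) (hC' : g 2 - 2 * g 1 ≤ C) (σ τ : ℝ) :
    NonnegSublinear
      (fun q => persp (fun t => g t + C) (max (σ * q 0) 0) (max (τ * q 1) 0)) where
  nonneg q := by
    calc (0 : ℝ) = persp (fun t => g t + C) 0 0 := by simp [persp]
      _ ≤ persp (fun t => g t + C) (max (σ * q 0) 0) 0 :=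
        persp_mono_left hg hC le_rfl (le_max_right _ _) le_rfl
      _ ≤ _ := persp_mono_right hg hC' (le_max_right _ _) le_rfl (le_max_right _ _)
  add_le p q := by
    have hmax : ∀ x y : ℝ, max (x + y) 0 ≤ max x 0 + max y 0 := fun x y =>
      max_le (add_le_add (le_max_left _ _) (le_max_left _ _))
        (add_nonneg (le_max_right _ _) (le_max_right _ _))
    simp only [PiLp.add_apply, mul_add]
    calc persp (fun t => g t + C) (max (σ * p 0 + σ * q 0) 0) (max (τ * p 1 + τ * q 1) 0)
        ≤ persp (fun t => g t + C) (max (σ * p 0) 0 + max (σ * q 0) 0)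
            (max (τ * p 1 + τ * q 1) 0) :=
          persp_mono_left hg hC (le_max_right _ _) (hmax _ _) (le_max_right _ _)
      _ ≤ persp (fun t => g t + C) (max (σ * p 0) 0 + max (σ * q 0) 0)
            (max (τ * p 1) 0 + max (τ * q 1) 0) :=
          persp_mono_right hg hC' (by positivity) (le_max_right _ _) (hmax _ _)
      _ ≤ _ := persp_add_le (hg.add_const C) (le_max_right _ _) (le_max_right _ _)
            (le_max_right _ _) (le_max_right _ _)
  hom l hl q := by
    have hmax : ∀ x : ℝ, max (l * x) 0 = l * max x 0 := fun x => by
      rw [mul_max_of_nonneg _ _ hl.le, mul_zero]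
    simp only [PiLp.smul_apply, smul_eq_mul, mul_left_comm _ l, hmax]
    exact persp_hom _ hl _ _

/-! ### Folding -/

theorem convexOn_segment {f : EuclideanSpace ℝ (Fin 2) → ℝ} (hf : ConvexOn ℝ Set.univ f)
    (σ τ : ℝ) : ConvexOn ℝ Set.univ (fun t : ℝ => f !₂[σ * t, τ * (1 - t)]) := by
  refine ⟨convex_univ, fun x _ y _ a b ha hb hab => ?_⟩
  have := hf.2 (mem_univ !₂[σ * x, τ * (1 - x)]) (mem_univ !₂[σ * y, τ * (1 - y)]) ha hb hab
  refine le_of_eq_of_le (congrArg f ?_) this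
  ext i
  fin_cases i
  · simp
    ring
  · simp
    linear_combination -τ * hab

theorem homogDC_fold {k : ℕ} {φ : EuclideanSpace ℝ (Fin 2) → ℝ}
    (hhom : ∀ l : ℝ, 0 < l → ∀ q, φ (l • q) = l ^ (k + 1) * φ q) (h0 : φ 0 = 0)
    {f₁ f₂ : EuclideanSpace ℝ (Fin 2) → ℝ} (hf₁ : ConvexOn ℝ Set.univ f₁)
    (hf₂ : ConvexOn ℝ Set.univ f₂) (hφ : φ = f₁ - f₂) (σ τ : ℝ) :
    HomogDC (k + 1) (fun q => φ !₂[σ * max (σ * q 0) 0, τ * max (τ * q 1) 0]) := by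
  set g₁ : ℝ → ℝ := fun t => f₁ !₂[σ * t, τ * (1 - t)] with hg₁
  set g₂ : ℝ → ℝ := fun t => f₂ !₂[σ * t, τ * (1 - t)] with hg₂
  have cg₁ : ConvexOn ℝ Set.univ g₁ := convexOn_segment hf₁ σ τ
  have cg₂ : ConvexOn ℝ Set.univ g₂ := convexOn_segment hf₂ σ τ
  obtain ⟨C, h1, h2, h3, h4⟩ : ∃ C : ℝ, g₁ (-1) - 2 * g₁ 0 ≤ C ∧ g₁ 2 - 2 * g₁ 1 ≤ C ∧
      g₂ (-1) - 2 * g₂ 0 ≤ C ∧ g₂ 2 - 2 * g₂ 1 ≤ C :=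
    ⟨max (max (g₁ (-1) - 2 * g₁ 0) (g₁ 2 - 2 * g₁ 1))
      (max (g₂ (-1) - 2 * g₂ 0) (g₂ 2 - 2 * g₂ 1)), by simp, by simp, by simp, by simp⟩
  -- The sum `(σx)⁺ + (τy)⁺` is itself a shifted perspective, with `g = 0` and `C = 1`.
  have hs := persp_fold (g := fun _ => 0) (convexOn_const 0 convex_univ) (C := 1)
    (by norm_num) (by norm_num) σ τ
  have H := (HomogDC.pow_mul hs (persp_fold cg₁ h1 h2 σ τ) k).sub
    (HomogDC.pow_mul hs (persp_fold cg₂ h3 h4 σ τ) k)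
  convert H using 1
  ext q
  simp only [Pi.sub_apply, Pi.mul_apply, Pi.pow_apply, persp, zero_add, mul_one]
  have hx : 0 ≤ max (σ * q 0) 0 := le_max_right _ _
  have hy : 0 ≤ max (τ * q 1) 0 := le_max_right _ _
  generalize max (σ * q 0) 0 = x at hx ⊢
  generalize max (τ * q 1) 0 = y at hy ⊢
  rcases (add_nonneg hx hy).eq_or_lt with h | h
  · obtain rfl : x = 0 := by linarith
    obtain rfl : y = 0 := by linarith
    have : (!₂[σ * 0, τ * 0] : EuclideanSpace ℝ (Fin 2)) = 0 := by
      ext i; fin_cases i <;> simp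
    rw [this, h0]
    simp
  · have e : (!₂[σ * x, τ * y] : EuclideanSpace ℝ (Fin 2)) =
        (x + y) • !₂[σ * (x / (x + y)), τ * (1 - x / (x + y))] := by
      ext i
      fin_cases i
      · simp
        field_simp
      · simp
        field_simp
        ring
    rw [e, hhom _ h, hφ]
    simp only [Pi.sub_apply, hg₁, hg₂]
    ring

theorem fold_identity {φ : EuclideanSpace ℝ (Fin 2) → ℝ} (h0 : φ 0 = 0) :
    let F : ℝ → ℝ → EuclideanSpace ℝ (Fin 2) → ℝ := fun σ τ q =>
      φ !₂[σ * max (σ * q 0) 0, τ * max (τ * q 1) 0]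
    φ = F 1 1 + F 1 (-1) + F (-1) 1 + F (-1) (-1)
      - (F 1 0 + F (-1) 0 + F 0 1 + F 0 (-1)) := by
  intro F
  ext q
  have hz : φ !₂[0, 0] = 0 := by
    have : (!₂[0, 0] : EuclideanSpace ℝ (Fin 2)) = 0 := by
      ext i; fin_cases i <;> simp
    rw [this, h0]
  have hq : φ q = φ !₂[q 0, q 1] := by
    congr 1
    ext i; fin_cases i <;> simp
  simp only [F, Pi.add_apply, Pi.sub_apply, one_mul, neg_one_mul, zero_mul]
  rw [hq]
  rcases le_total 0 (q 0) with hx | hx <;> rcases le_total 0 (q 1) with hy | hy <;>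
    simp [hx, hy, hz] <;> ring

/-- if `φ : ℝ² → ℝ` is positively homogeneous of degree `m`, Lipschitz on the
closed unit ball, and a difference of two convex functions, then it is a difference of two
convex functions that are themselves positively homogeneous of degree `m`. -/
theorem dc_posHomog_decomposition
    (m : ℕ) (hm : 0 < m) (φ : EuclideanSpace ℝ (Fin 2) → ℝ)
    (hhom : ∀ l : ℝ, 0 < l → ∀ q, φ (l • q) = l ^ m * φ q)
    (hlip : ∃ L : ℝ≥0, LipschitzOnWith L φ (Metric.closedBall 0 1))
    (hdc : ∃ f₁ f₂ : EuclideanSpace ℝ (Fin 2) → ℝ,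
      ConvexOn ℝ Set.univ f₁ ∧ ConvexOn ℝ Set.univ f₂ ∧ φ = f₁ - f₂) :
    ∃ φ₁ φ₂ : EuclideanSpace ℝ (Fin 2) → ℝ,
      ConvexOn ℝ Set.univ φ₁ ∧ ConvexOn ℝ Set.univ φ₂ ∧
      (∀ l : ℝ, 0 < l → ∀ q, φ₁ (l • q) = l ^ m * φ₁ q) ∧
      (∀ l : ℝ, 0 < l → ∀ q, φ₂ (l • q) = l ^ m * φ₂ q) ∧
      φ = φ₁ - φ₂ := by
  obtain ⟨k, rfl⟩ : ∃ k, m = k + 1 := ⟨m - 1, by omega⟩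
  obtain ⟨f₁, f₂, hf₁, hf₂, hφ⟩ := hdc
  have h0 : φ 0 = 0 := by
    have h := hhom 2 two_pos 0
    rw [smul_zero] at h
    have h2 : (1 : ℝ) < 2 ^ (k + 1) := one_lt_pow₀ one_lt_two (Nat.succ_ne_zero k)
    have h3 : ((2 : ℝ) ^ (k + 1) - 1) * φ 0 = 0 := by linarith
    exact (mul_eq_zero.1 h3).resolve_left (by linarith)
  have F := homogDC_fold hhom h0 hf₁ hf₂ hφ
  have H : HomogDC (k + 1) φ := by
    rw [fold_identity h0]
    exact ((((F 1 1).add (F 1 (-1))).add (F (-1) 1)).add (F (-1) (-1))).sub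
      ((((F 1 0).add (F (-1) 0)).add (F 0 1)).add (F 0 (-1)))
  exact H
end
end

section
/- Let n > 2, let D ⊆ ℝⁿ be a bounded convex open set with compact closure, and let f₁ : ℝⁿ → ℝ be a continuous convex function. Then there exists a constant c₂(D, f₁) > 0 such that for every curve r ∈ ℘̃(D), parametrized by arc length on [0, T_r], the function Φ₁(t) = f₁(r(t)) satisfies ∨(Φ₁'; 0, T_r) ≤ c₂(D, f₁)·(1 + ∨(r'; 0, T_r)). -/
/-!
The composition `f₁ ∘ r` is a difference of convex functions, quantitatively. If `L` is a Lipschitz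
constant of `f₁` on the convex set `D`, then convexity at the midpoint of `r (t - h)` and `r (t + h)`
gives
`f₁ (r (t + h)) - 2 f₁ (r t) + f₁ (r (t - h)) ≥ -L ‖r (t + h) - 2 r t + r (t - h)‖`.
Summing over an equidistant subdivision of `[a, b]`, the left-hand side telescopes to the difference
of two one-step increments of `Φ = f₁ ∘ r`, while the sum of the norms of second differences of `r`
is at most the step times the variation of `r'` over the open interval `(a, b)`
(`sum_norm_second_diff_le`). Letting the step tend to zero, `Φ' b - Φ' a ≥ -L ∨(r'; (a, b))`
whenever `Φ` is differentiable at `a` and `b` (`deriv_sub_ge`); no differentiability of `r` at `a`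
and `b` is needed, which matters because `Φ` may be differentiable where `r` is not. The variations
over disjoint open intervals add up to at most `∨(r'; 0, T)`, so the negative part of the variation
of `Φ'` is at most `L ∨(r'; 0, T)`. As `|Φ'| ≤ L`, the total variation of `Φ'` is at most
`2L + 2L ∨(r'; 0, T)`.
-/

open Set
open scoped ENNReal NNReal

noncomputable section

/-- `r` is parametrized by arc length on `[0,T]`: for all `0 ≤ s ≤ t ≤ T` the total
variation of `r` on `[s,t]` equals `t - s`. -/
def ArcLengthOn {E : Type*} [NormedAddCommGroup E] [NormedSpace ℝ E]
    (r : ℝ → E) (T : ℝ) : Prop :=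
  ∀ s t : ℝ, 0 ≤ s → s ≤ t → t ≤ T → eVariationOn r (Set.Icc s t) = ENNReal.ofReal (t - s)

/-- Projection of `ℝⁿ` onto the coordinate plane spanned by coordinates `i` and `j`. -/
def proj2 {n : ℕ} (i j : Fin n) (x : EuclideanSpace ℝ (Fin n)) : EuclideanSpace ℝ (Fin 2) :=
  (WithLp.equiv 2 (Fin 2 → ℝ)).symm ![x i, x j]

/-- Membership in the class `℘̃(D)`: closed curves in `D` parametrized by arc length,
admitting a pair of distinct coordinate indices such that the projection onto the
corresponding coordinate plane is injective on `[0,T)` with image the frontier of a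
compact convex subset (with nonempty interior) of the projection of `D`; moreover both
`r(t)` and `r'(t)` make an angle of at most `π/4` with that coordinate plane. -/
def MemCurveClassPTilde {n : ℕ} (D : Set (EuclideanSpace ℝ (Fin n))) (T : ℝ)
    (r : ℝ → EuclideanSpace ℝ (Fin n)) : Prop :=
  0 < T ∧ (∀ t ∈ Set.Icc (0 : ℝ) T, r t ∈ D) ∧ r 0 = r T ∧ ArcLengthOn r T ∧
  ∃ i j : Fin n, i ≠ j ∧
    Set.InjOn (fun t => proj2 i j (r t)) (Set.Ico 0 T) ∧
    (∃ K : Set (EuclideanSpace ℝ (Fin 2)), IsCompact K ∧ Convex ℝ K ∧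
      K ⊆ (proj2 i j) '' D ∧ (interior K).Nonempty ∧
      (fun t => proj2 i j (r t)) '' Set.Icc 0 T = frontier K) ∧
    (∀ t ∈ Set.Icc (0 : ℝ) T, ‖proj2 i j (r t)‖ ≥ (Real.sqrt 2 / 2) * ‖r t‖) ∧
    (∀ t ∈ Set.Icc (0 : ℝ) T, DifferentiableAt ℝ r t →
      ‖proj2 i j (deriv r t)‖ ≥ Real.sqrt 2 / 2)

open Filter Topology MeasureTheory

/-! ### Lipschitz bounds -/

/-- A convex continuous function on `ℝⁿ` is Lipschitz on bounded sets. -/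
lemma exists_lipschitz_of_convex {n : ℕ} {D : Set (EuclideanSpace ℝ (Fin n))}
    (hD : Bornology.IsBounded D) {f : EuclideanSpace ℝ (Fin n) → ℝ} (hcont : Continuous f)
    (hconv : ConvexOn ℝ Set.univ f) :
    ∃ L : ℝ, 0 < L ∧ ∀ x ∈ D, ∀ y ∈ D, |f x - f y| ≤ L * ‖x - y‖ := by
  obtain ⟨R, hR⟩ := hD.subset_ball 0
  have hb : Bornology.IsBounded (f '' Metric.ball 0 (R + 1)) :=
    (((isCompact_closedBall (0 : EuclideanSpace ℝ (Fin n)) (R + 1)).image hcont).isBounded).subset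
      (Set.image_mono Metric.ball_subset_closedBall)
  obtain ⟨K, hK⟩ := (hconv.subset (Set.subset_univ _)
    (convex_ball (0 : EuclideanSpace ℝ (Fin n)) (R + 1))).exists_lipschitzOnWith_of_isBounded
      (lt_add_one R) hb
  refine ⟨K + 1, by positivity, fun x hx y hy => ?_⟩
  have := hK.dist_le_mul x (hR hx) y (hR hy)
  rw [Real.dist_eq, dist_eq_norm] at this
  nlinarith [norm_nonneg (x - y)]

lemma ArcLengthOn.norm_sub_le {E : Type*} [NormedAddCommGroup E] [NormedSpace ℝ E]
    {r : ℝ → E} {T : ℝ} (h : ArcLengthOn r T) {s t : ℝ} (hs : s ∈ Icc 0 T) (ht : t ∈ Icc 0 T) :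
    ‖r s - r t‖ ≤ |s - t| := by
  wlog hst : s ≤ t generalizing s t
  · rw [norm_sub_rev, abs_sub_comm]
    exact this ht hs (le_of_not_ge hst)
  have h1 := h s t hs.1 hst ht.2
  have h2 := eVariationOn.edist_le r (left_mem_Icc.2 hst) (right_mem_Icc.2 hst)
  rw [h1, edist_dist, ENNReal.ofReal_le_ofReal_iff (by linarith), dist_eq_norm] at h2
  rw [abs_sub_comm, abs_of_nonneg (by linarith : 0 ≤ t - s)]
  exact h2

/-! ### Variation of the derivative -/

/-- The variation of the derivative dominates the Mathlib variation of `deriv f` on the set of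
differentiability points: a strictly increasing sequence witnessing a sum of the latter, restricted
to its first `N + 1` terms, witnesses the same sum for the former. -/
lemma eVariationOn_deriv_le {E : Type*} [NormedAddCommGroup E] [NormedSpace ℝ E]
    (f : ℝ → E) (a b : ℝ) :
    eVariationOn (deriv f) ({t | DifferentiableAt ℝ f t} ∩ Icc a b) ≤ derivVariation f a b := by
  rw [eVariationOn.eVariationOn_eq_strictMonoOn]
  refine iSup_le ?_
  rintro ⟨N, u, hu, hmem⟩
  let t : Fin (N + 1) → ℝ := fun i => u i
  have ht : StrictMono t := fun i j hij =>
    hu (Nat.lt_succ_iff.1 i.2) (Nat.lt_succ_iff.1 j.2) hij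
  have ht' : ∀ i, t i ∈ Icc a b ∧ DifferentiableAt ℝ f (t i) := fun i =>
    ⟨(hmem i (Nat.lt_succ_iff.1 i.2)).2, (hmem i (Nat.lt_succ_iff.1 i.2)).1⟩
  refine le_trans (le_of_eq ?_) (le_iSup_of_le N (le_iSup_of_le t (le_iSup_of_le ht
    (le_iSup_of_le ht' le_rfl))))
  rw [Finset.sum_range]
  refine Finset.sum_congr rfl fun i _ => ?_
  rw [edist_dist, dist_eq_norm]
  rfl

/-- Superadditivity of the variation over the consecutive open intervals of a subdivision. -/
lemma sum_eVariationOn_Ioo_le {E : Type*} [PseudoEMetricSpace E] (g : ℝ → E) (S : Set ℝ) :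
    ∀ (N : ℕ) (t : Fin (N + 1) → ℝ), Monotone t →
      ∑ i : Fin N, eVariationOn g (S ∩ Ioo (t i.castSucc) (t i.succ)) ≤
        eVariationOn g (S ∩ Icc (t 0) (t (Fin.last N))) := by
  intro N
  induction N with
  | zero => intro t _; simp
  | succ N ih =>
    intro t ht
    rw [Fin.sum_univ_castSucc]
    have h1 := ih (fun i => t i.castSucc) (fun i j hij => ht (Fin.castSucc_le_castSucc_iff.2 hij))
    have hm0 : t 0 ≤ t (Fin.last N).castSucc := ht (Fin.zero_le _)
    have hm1 : t (Fin.last N).castSucc ≤ t (Fin.last (N + 1)) := ht (Fin.le_last _)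
    refine (add_le_add h1 le_rfl).trans ((eVariationOn.add_le_union g ?_).trans
      (eVariationOn.mono g ?_))
    · intro x hx y hy
      exact hx.2.2.trans hy.2.1.le
    · rintro x (hx | hx)
      · exact ⟨hx.1, hx.2.1, hx.2.2.trans hm1⟩
      · exact ⟨hx.1, hm0.trans hx.2.1.le, hx.2.2.le⟩

/-! ### Second differences of the curve -/

/-- Mean value inequality for Lipschitz functions: a bound for the derivative almost everywhere
suffices. -/
lemma sub_le_of_ae_hasDerivAt_le {ψ : ℝ → ℝ} {K : ℝ≥0} {h C : ℝ} (hh : 0 ≤ h)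
    (hψ : LipschitzOnWith K ψ (Icc 0 h))
    (hd : ∀ᵐ s, s ∈ Ioo 0 h → ∃ d, HasDerivAt ψ d s ∧ d ≤ C) : ψ h - ψ 0 ≤ h * C := by
  have hac : AbsolutelyContinuousOnInterval ψ 0 h :=
    LipschitzOnWith.absolutelyContinuousOnInterval (K := K) (by rwa [uIcc_of_le hh])
  rw [← hac.integral_deriv_eq_sub]
  have hle : deriv ψ ≤ᵐ[volume.restrict (Icc 0 h)] fun _ => C := by
    rw [← restrict_Ioo_eq_restrict_Icc]
    refine (ae_restrict_iff' measurableSet_Ioo).2 ?_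
    filter_upwards [hd] with s hs hs'
    obtain ⟨d, h1, h2⟩ := hs hs'
    rw [h1.deriv]
    exact h2
  have := intervalIntegral.integral_mono_ae_restrict hh hac.intervalIntegrable_deriv
    (intervalIntegrable_const (c := C)) hle
  simpa using this

/-- The second differences of `r` along an equidistant subdivision of `[a, b]` with step `h` are
bounded in total by `h` times the variation of `r'` on the open interval: pairing them with the unit
vectors `u k` that realise their norms, one integrates the differences of `r'` at the translated
nodes `a + k * h + s` over `s ∈ (0, h)`. -/
lemma sum_norm_second_diff_le {n : ℕ} {r : ℝ → EuclideanSpace ℝ (Fin n)} {a b h : ℝ}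
    (hr : ∀ s ∈ Icc a b, ∀ t ∈ Icc a b, ‖r s - r t‖ ≤ |s - t|) (M : ℕ) (hh : 0 < h)
    (hb : a + (M + 1) * h = b)
    (hW : eVariationOn (deriv r) ({t | DifferentiableAt ℝ r t} ∩ Ioo a b) ≠ ⊤) :
    ∑ k ∈ Finset.range M,
        ‖(r (a + (k + 2) * h) - r (a + (k + 1) * h)) - (r (a + (k + 1) * h) - r (a + k * h))‖ ≤
      h * (eVariationOn (deriv r) ({t | DifferentiableAt ℝ r t} ∩ Ioo a b)).toReal := by
  set W := eVariationOn (deriv r) ({t | DifferentiableAt ℝ r t} ∩ Ioo a b) with hWdef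
  let D : ℕ → EuclideanSpace ℝ (Fin n) := fun k =>
    (r (a + (k + 2) * h) - r (a + (k + 1) * h)) - (r (a + (k + 1) * h) - r (a + k * h))
  have hu : ∀ v : EuclideanSpace ℝ (Fin n), ∃ u : EuclideanSpace ℝ (Fin n),
      ‖u‖ ≤ 1 ∧ inner ℝ u v = ‖v‖ := by
    intro v
    by_cases hv : v = 0
    · exact ⟨0, by simp, by simp [hv]⟩
    · refine ⟨(‖v‖⁻¹ : ℝ) • v, ?_, ?_⟩
      · rw [norm_smul, norm_inv, norm_norm, inv_mul_cancel₀ (norm_ne_zero_iff.2 hv)]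
      · rw [real_inner_smul_left, real_inner_self_eq_norm_sq]
        have := norm_ne_zero_iff.2 hv
        field_simp
  choose u hu1 hu2 using fun k => hu (D k)
  have hinner : ∀ k (v : EuclideanSpace ℝ (Fin n)), |inner ℝ (u k) v| ≤ ‖v‖ := fun k v =>
    (abs_real_inner_le_norm _ _).trans
      (mul_le_of_le_one_left (norm_nonneg _) (hu1 k))
  let ψ : ℝ → ℝ := fun s => ∑ k ∈ Finset.range M,
    inner ℝ (u k) (r (a + (k + 1) * h + s) - r (a + k * h + s))
  have hnode : ∀ k : ℕ, k ≤ M → ∀ s ∈ Icc 0 h, a + k * h + s ∈ Icc a b := by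
    intro k hk s hs
    have h1 : (k : ℝ) ≤ M := by exact_mod_cast hk
    have h2 : (0 : ℝ) ≤ k := Nat.cast_nonneg k
    constructor
    · nlinarith [hs.1, hs.2]
    · nlinarith [hs.1, hs.2]
  have hnode' : ∀ k : ℕ, k ≤ M → ∀ s ∈ Ioo 0 h, a + k * h + s ∈ Ioo a b := by
    intro k hk s hs
    have h1 : (k : ℝ) ≤ M := by exact_mod_cast hk
    have h2 : (0 : ℝ) ≤ k := Nat.cast_nonneg k
    constructor
    · nlinarith [hs.1, hs.2]
    · nlinarith [hs.1, hs.2]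
  have hlip : LipschitzOnWith (2 * M : ℝ≥0) ψ (Icc 0 h) := by
    refine LipschitzOnWith.of_dist_le_mul fun s hs t ht => ?_
    rw [Real.dist_eq, Real.dist_eq]
    simp only [ψ]
    rw [← Finset.sum_sub_distrib]
    refine (Finset.abs_sum_le_sum_abs _ _).trans ?_
    refine (Finset.sum_le_card_nsmul _ _ (2 * |s - t|) ?_).trans (le_of_eq ?_)
    · intro k hk
      have hk' := Finset.mem_range.1 hk
      rw [← inner_sub_right]
      refine (hinner k _).trans ?_
      have e1 := hr _ (hnode (k + 1) hk' s hs) _ (hnode (k + 1) hk' t ht)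
      have e2 := hr _ (hnode k hk'.le s hs) _ (hnode k hk'.le t ht)
      push_cast at e1
      rw [add_sub_add_left_eq_sub] at e1 e2
      rw [sub_sub_sub_comm]
      exact (norm_sub_le _ _).trans (by linarith)
    · simp
      ring
  have hae : ∀ᵐ x, x ∈ Ioo a b → DifferentiableAt ℝ r x := by
    have hl : LipschitzOnWith 1 r (Icc a b) := LipschitzOnWith.of_dist_le_mul fun s hs t ht => by
      rw [dist_eq_norm, Real.dist_eq]
      simpa using hr s hs t ht
    filter_upwards [hl.ae_differentiableWithinAt_of_mem_real] with x hx hx'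
    exact (hx (Ioo_subset_Icc_self hx')).differentiableAt (Icc_mem_nhds hx'.1 hx'.2)
  have hae' : ∀ᵐ s : ℝ, ∀ k : ℕ, a + k * h + s ∈ Ioo a b → DifferentiableAt ℝ r (a + k * h + s) := by
    rw [ae_all_iff]
    intro k
    exact (measurePreserving_add_left volume (a + k * h)).quasiMeasurePreserving.ae hae
  have key := sub_le_of_ae_hasDerivAt_le (C := W.toReal) hh.le hlip (by
    filter_upwards [hae'] with s hs hs'
    have hdiff : ∀ k ≤ M, DifferentiableAt ℝ r (a + k * h + s) := fun k hk =>
      hs k (hnode' k hk s hs')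
    have hder : ∀ k ≤ M, HasDerivAt (fun s => r (a + k * h + s)) (deriv r (a + k * h + s)) s :=
      fun k hk => (hdiff k hk).hasDerivAt.comp_const_add _ _
    refine ⟨∑ k ∈ Finset.range M,
      inner ℝ (u k) (deriv r (a + (k + 1) * h + s) - deriv r (a + k * h + s)), ?_, ?_⟩
    · refine HasDerivAt.fun_sum fun k hk => ?_
      have hk' := Finset.mem_range.1 hk
      have e1 := hder (k + 1) hk'
      push_cast at e1
      have := (hasDerivAt_const s (u k)).inner ℝ (e1.sub (hder k hk'.le))
      simpa using this
    · have hsum : ∑ i ∈ Finset.range M,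
          edist (deriv r (a + (i + 1 : ℕ) * h + s)) (deriv r (a + i * h + s)) ≤ W := by
        refine eVariationOn.sum_le_of_monotoneOn_Iic (u := fun i : ℕ => a + i * h + s) ?_ ?_
        · intro i _ j _ hij
          have : (i : ℝ) ≤ j := by exact_mod_cast hij
          have := mul_le_mul_of_nonneg_right this hh.le
          simp only
          linarith
        · exact fun i hi => ⟨hdiff i hi, hnode' i hi s hs'⟩
      have hsum' := ENNReal.toReal_mono hW hsum
      rw [ENNReal.toReal_sum (fun i _ => edist_ne_top _ _)] at hsum'
      refine le_trans (Finset.sum_le_sum fun k _ => ?_) hsum'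
      rw [edist_dist, ENNReal.toReal_ofReal dist_nonneg, dist_eq_norm]
      push_cast
      exact (le_abs_self _).trans (hinner k _))
  refine le_trans (le_of_eq ?_) key
  simp only [ψ]
  rw [← Finset.sum_sub_distrib]
  refine Finset.sum_congr rfl fun k _ => ?_
  rw [← inner_sub_right]
  refine (hu2 k).symm.trans ?_
  simp only [D]
  congr 3 <;> congr 1 <;> ring_nf

/-! ### The derivative of the composition -/

/-- Forward difference quotients along the steps `(b - a) / (M + 1)`. -/
lemma tendsto_forward {Φ : ℝ → ℝ} {d a b : ℝ} (hab : a < b) (h : HasDerivAt Φ d a) :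
    Tendsto (fun M : ℕ => ((b - a) / (M + 1))⁻¹ * (Φ (a + (b - a) / (M + 1)) - Φ a))
      atTop (𝓝 d) := by
  have hstep : Tendsto (fun M : ℕ => (b - a) / ((M : ℝ) + 1)) atTop (𝓝[>] 0) := by
    refine tendsto_nhdsWithin_iff.2 ⟨?_, Eventually.of_forall fun M => ?_⟩
    · simpa [div_eq_mul_inv] using (tendsto_one_div_add_atTop_nhds_zero_nat (𝕜 := ℝ)).const_mul (b - a)
    · exact div_pos (sub_pos.2 hab) (by positivity)
  exact h.tendsto_slope_zero_right.comp hstep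

/-- Backward difference quotients along the steps `(b - a) / (M + 1)`. -/
lemma tendsto_backward {Φ : ℝ → ℝ} {d a b : ℝ} (hab : a < b) (h : HasDerivAt Φ d b) :
    Tendsto (fun M : ℕ => ((b - a) / (M + 1))⁻¹ * (Φ b - Φ (b - (b - a) / (M + 1))))
      atTop (𝓝 d) := by
  have h' : HasDerivAt (fun s => -Φ (-s)) d (-b) := by
    have h1 : HasDerivAt Φ d (-(-b)) := by rwa [neg_neg]
    have := (h1.scomp (-b) (hasDerivAt_neg (-b))).fun_neg
    simpa [Function.comp_def] using this
  have := tendsto_forward (a := -b) (b := -a) (by linarith) h'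
  refine this.congr fun M => ?_
  have e1 : -a - -b = b - a := by ring
  have e2 : -(-b + (b - a) / ((M : ℝ) + 1)) = b - (b - a) / (M + 1) := by ring
  rw [e1, e2, neg_neg]
  ring

/-- The negative part of the increment of the derivative of `f ∘ r`, for `f` convex, is controlled
by the variation of `r'` strictly between the two points. -/
lemma deriv_sub_ge {n : ℕ} {D : Set (EuclideanSpace ℝ (Fin n))} (hD : Convex ℝ D)
    {f : EuclideanSpace ℝ (Fin n) → ℝ} (hconv : ConvexOn ℝ Set.univ f) {L : ℝ} (hL0 : 0 < L)
    (hL : ∀ x ∈ D, ∀ y ∈ D, |f x - f y| ≤ L * ‖x - y‖)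
    {r : ℝ → EuclideanSpace ℝ (Fin n)} {a b p q : ℝ} (hab : a < b)
    (hr : ∀ s ∈ Icc a b, ∀ t ∈ Icc a b, ‖r s - r t‖ ≤ |s - t|) (hrD : ∀ s ∈ Icc a b, r s ∈ D)
    (hW : eVariationOn (deriv r) ({t | DifferentiableAt ℝ r t} ∩ Ioo a b) ≠ ⊤)
    (ha : HasDerivAt (fun t => f (r t)) p a) (hb : HasDerivAt (fun t => f (r t)) q b) :
    -(L * (eVariationOn (deriv r) ({t | DifferentiableAt ℝ r t} ∩ Ioo a b)).toReal) ≤ q - p := by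
  refine ge_of_tendsto' ((tendsto_backward hab hb).sub (tendsto_forward hab ha)) fun M => ?_
  set h : ℝ := (b - a) / (M + 1) with hh
  have hM : (0 : ℝ) < M + 1 := by positivity
  have hpos : 0 < h := div_pos (sub_pos.2 hab) hM
  have hbe : a + (M + 1) * h = b := by rw [hh]; field_simp; ring
  have key := sum_norm_second_diff_le hr M hpos hbe hW
  have hnode : ∀ k : ℕ, k ≤ M + 1 → a + k * h ∈ Icc a b := by
    intro k hk
    have h1 : (k : ℝ) ≤ M + 1 := by exact_mod_cast hk
    have h2 : (0 : ℝ) ≤ k := Nat.cast_nonneg k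
    constructor <;> nlinarith
  let G : ℕ → ℝ := fun k => f (r (a + (k + 1) * h)) - f (r (a + k * h))
  have hsecond : ∀ k ∈ Finset.range M,
      -(L * ‖(r (a + (k + 2) * h) - r (a + (k + 1) * h)) - (r (a + (k + 1) * h) - r (a + k * h))‖)
        ≤ G (k + 1) - G k := by
    intro k hk
    have hk' := Finset.mem_range.1 hk
    have n0 := hrD _ (hnode k (by omega))
    have n1 := hrD _ (hnode (k + 1) (by omega))
    have n2 := hrD _ (hnode (k + 2) (by omega))
    simp only [G]
    push_cast at n1 n2 ⊢
    have e : (k : ℝ) + 1 + 1 = k + 2 := by ring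
    rw [e]
    generalize r (a + (k + 2) * h) = z at *
    generalize r (a + (k + 1) * h) = y at *
    generalize r (a + k * h) = x at *
    have hmid : (1 / 2 : ℝ) • x + (1 / 2 : ℝ) • z ∈ D :=
      hD n0 n2 (by norm_num) (by norm_num) (by norm_num)
    have hc := hconv.2 (Set.mem_univ x) (Set.mem_univ z) (by norm_num : (0 : ℝ) ≤ 1 / 2)
      (by norm_num : (0 : ℝ) ≤ 1 / 2) (by norm_num)
    have hl := (abs_le.1 (hL _ hmid _ n1)).1
    have e2 : (1 / 2 : ℝ) • x + (1 / 2 : ℝ) • z - y = (1 / 2 : ℝ) • ((z - y) - (y - x)) := by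
      module
    rw [e2, norm_smul] at hl
    norm_num at hl hc
    linarith
  have hsum := Finset.sum_le_sum hsecond
  rw [Finset.sum_range_sub, Finset.sum_neg_distrib, ← Finset.mul_sum] at hsum
  have hGM : G M = f (r b) - f (r (b - h)) := by
    have : a + M * h = b - h := by linarith
    simp only [G]
    rw [hbe, this]
  have hG0 : G 0 = f (r (a + h)) - f (r a) := by simp [G]
  rw [hGM, hG0] at hsum
  have := mul_le_mul_of_nonneg_left key hL0.le
  rw [← mul_sub, inv_mul_eq_div, le_div_iff₀ hpos]
  linarith

/-- for `n > 2`, a bounded convex open `D ⊆ ℝⁿ` with compact closure and a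
continuous convex function `f₁ : ℝⁿ → ℝ`, there is `c₂ > 0` such that
`∨(Φ₁'; 0, T_r) ≤ c₂·(1 + ∨(r'; 0, T_r))` for every `r ∈ ℘̃(D)`, where `Φ₁(t) = f₁(r(t))`. -/
theorem derivVariation_le_of_convex_on_classPTilde
    (n : ℕ) (hn : 2 < n)
    (D : Set (EuclideanSpace ℝ (Fin n))) (hDopen : IsOpen D) (hDconv : Convex ℝ D)
    (hDbdd : Bornology.IsBounded D) (hDcl : IsCompact (closure D))
    (f₁ : EuclideanSpace ℝ (Fin n) → ℝ) (hcont : Continuous f₁)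
    (hconv : ConvexOn ℝ Set.univ f₁) :
    ∃ c : ℝ, 0 < c ∧ ∀ (T : ℝ) (r : ℝ → EuclideanSpace ℝ (Fin n)),
      MemCurveClassPTilde D T r →
        derivVariation (fun t => f₁ (r t)) 0 T ≤
          ENNReal.ofReal c * (1 + derivVariation r 0 T) := by
  obtain ⟨L, hL0, hL⟩ := exists_lipschitz_of_convex hDbdd hcont hconv
  refine ⟨2 * L, by positivity, fun T r hr => ?_⟩
  obtain ⟨-, hrD, -, harc, -⟩ := hr
  set V := derivVariation r 0 T with hV
  by_cases hVtop : V = ⊤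
  · rw [hVtop, add_top, ENNReal.mul_top (by simpa using hL0)]
    exact le_top
  refine iSup_le fun N => iSup_le fun t => iSup_le fun ht => iSup_le fun hmem => ?_
  set Φ : ℝ → ℝ := fun t => f₁ (r t) with hΦ
  set W : Fin N → ℝ≥0∞ := fun i =>
    eVariationOn (deriv r) ({t | DifferentiableAt ℝ r t} ∩ Ioo (t i.castSucc) (t i.succ)) with hWdef
  have hWsum : ∑ i, W i ≤ V :=
    (sum_eVariationOn_Ioo_le (deriv r) {t | DifferentiableAt ℝ r t} N t ht.monotone).trans
      ((eVariationOn.mono _ (Set.inter_subset_inter_right _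
        (Set.Icc_subset_Icc (hmem 0).1.1 (hmem (Fin.last N)).1.2))).trans
          (eVariationOn_deriv_le r 0 T))
  have hWtop : ∀ i, W i ≠ ⊤ := fun i =>
    ne_top_of_le_ne_top hVtop ((Finset.single_le_sum (fun _ _ => zero_le) (Finset.mem_univ i)).trans hWsum)
  have hWreal : ∑ i, (W i).toReal ≤ V.toReal := by
    rw [← ENNReal.toReal_sum fun i _ => hWtop i]
    exact ENNReal.toReal_mono hVtop hWsum
  have hsub : ∀ i : Fin N, Icc (t i.castSucc) (t i.succ) ⊆ Icc 0 T := fun i =>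
    Set.Icc_subset_Icc (hmem _).1.1 (hmem _).1.2
  have hlt : ∀ i : Fin N, t i.castSucc < t i.succ := fun i => ht Fin.castSucc_lt_succ
  have hder : ∀ i, HasDerivAt Φ (deriv Φ (t i)) (t i) := fun i => (hmem i).2.hasDerivAt
  have hΦlip : ∀ x ∈ Icc 0 T, ∀ y ∈ Icc 0 T, |Φ x - Φ y| ≤ L * |x - y| := fun x hx y hy =>
    (hL _ (hrD x hx) _ (hrD y hy)).trans
      (mul_le_mul_of_nonneg_left (harc.norm_sub_le hx hy) hL0.le)
  have habs : ∀ i : Fin N, ‖deriv Φ (t i.succ) - deriv Φ (t i.castSucc)‖ ≤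
      (deriv Φ (t i.succ) - deriv Φ (t i.castSucc)) + 2 * L * (W i).toReal := by
    intro i
    have h1 := deriv_sub_ge hDconv hconv hL0 hL (hlt i)
      (fun s hs t ht => harc.norm_sub_le (hsub i hs) (hsub i ht))
      (fun s hs => hrD s (hsub i hs)) (hWtop i) (hder _) (hder _)
    have h2 : 0 ≤ L * (W i).toReal := by positivity
    change -(L * (W i).toReal) ≤ _ at h1
    rw [Real.norm_eq_abs, abs_le]
    constructor <;> linarith
  have htel : ∑ i : Fin N, (deriv Φ (t i.succ) - deriv Φ (t i.castSucc)) ≤ 2 * L := by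
    rw [Finset.sum_sub_distrib]
    have e1 := Fin.sum_univ_succ fun i => deriv Φ (t i)
    have e2 := Fin.sum_univ_castSucc fun i => deriv Φ (t i)
    have e3 : ∑ i : Fin N, deriv Φ (t i.succ) - ∑ i : Fin N, deriv Φ (t i.castSucc) =
        deriv Φ (t (Fin.last N)) - deriv Φ (t 0) := by linarith
    rw [e3]
    rcases Nat.eq_zero_or_pos N with rfl | hN
    · simp [hL0.le]
    -- One-sided difference quotients taken inside `[t 0, t N]` bound the derivatives at both ends.
    have h0N : t 0 < t (Fin.last N) := ht (Fin.lt_def.2 (by simpa using hN))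
    have hstep : ∀ M : ℕ, 0 < (t (Fin.last N) - t 0) / (M + 1) ∧
        (t (Fin.last N) - t 0) / (M + 1) ≤ t (Fin.last N) - t 0 := fun M =>
      ⟨div_pos (sub_pos.2 h0N) (by positivity), div_le_self (sub_pos.2 h0N).le (by simp)⟩
    have m0 := (hmem 0).1
    have mN := (hmem (Fin.last N)).1
    have b1 : deriv Φ (t (Fin.last N)) ≤ L := by
      refine le_of_tendsto' (tendsto_backward h0N (hder _)) fun M => ?_
      obtain ⟨hp, hle⟩ := hstep M
      have := (le_abs_self _).trans (hΦlip _ mN (t (Fin.last N) - (t (Fin.last N) - t 0) / (M + 1))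
        ⟨by linarith [m0.1], by linarith [mN.2]⟩)
      rw [sub_sub_cancel, abs_of_pos hp] at this
      rwa [inv_mul_eq_div, div_le_iff₀ hp]
    have b2 : -L ≤ deriv Φ (t 0) := by
      refine ge_of_tendsto' (tendsto_forward h0N (hder _)) fun M => ?_
      obtain ⟨hp, hle⟩ := hstep M
      have := (abs_le.1 (hΦlip (t 0 + (t (Fin.last N) - t 0) / (M + 1))
        ⟨by linarith [m0.1], by linarith [mN.2]⟩ _ m0)).1
      rw [add_sub_cancel_left, abs_of_pos hp] at this
      rw [inv_mul_eq_div, le_div_iff₀ hp]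
      linarith
    linarith
  rw [← ENNReal.ofReal_sum_of_nonneg fun i _ => norm_nonneg _]
  have hfin : ∑ i : Fin N, ‖deriv Φ (t i.succ) - deriv Φ (t i.castSucc)‖ ≤
      2 * L * (1 + V.toReal) := by
    refine (Finset.sum_le_sum fun i _ => habs i).trans ?_
    rw [Finset.sum_add_distrib, ← Finset.mul_sum]
    have := mul_le_mul_of_nonneg_left hWreal (by positivity : 0 ≤ 2 * L)
    linarith
  refine (ENNReal.ofReal_le_ofReal hfin).trans (le_of_eq ?_)
  rw [ENNReal.ofReal_mul (by positivity), ENNReal.ofReal_add zero_le_one ENNReal.toReal_nonneg,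
    ENNReal.ofReal_one, ENNReal.ofReal_toReal hVtop]
end
end

section
/- Let a < b and let Ψ_k : [a,b] → ℝ, k = 1, 2, …, be Lipschitz functions converging uniformly on [a,b] to a function Ψ. Suppose there exists a constant c > 0 such that ∨(Ψ_k'; a,b) ≤ c for every k. Then Ψ is differentiable on a set of full measure, dense in [a,b], and ∨(Ψ'; a,b) ≤ 2c; moreover Ψ is representable on [a,b] as a difference of two convex functions. -/
/-!
Each `Ψₖ` is the integral of its derivative, so the difference quotient of `Ψₖ` over `[x, x + d]`
is the mean over `s ∈ [0,1]` of `Ψₖ'(x + d s)`. For finitely many consecutive segments and almost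
every `s`, the points `x + d s` form an increasing sequence of differentiability points; averaging
the bound on the variation of `Ψₖ'` over `s` bounds by `c` the variation of the difference quotients
(`sum_slope_le`). This bound involves only values of `Ψₖ`, hence passes to the limit `k → ∞`; letting
the segments shrink to points gives `∨(Ψ'; a,b) ≤ c` (`derivVariation_le_of_tendsto`), which is
stronger than the factor `2c`. In the same way all difference quotients of `Ψₖ` lie within `c` of
the mean slope over `[a,b]`, so `Ψ` is Lipschitz (`exists_lipschitz_of_tendsto`), and Rademacher's
theorem gives differentiability almost everywhere, in particular on a dense set.

For the convex decomposition, let `gₖ` be the primitive of the variation function of `Ψₖ'`. Then `gₖ`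
and `gₖ - Ψₖ` have densities that are monotone almost everywhere, so both are convex, and `gₖ` takes
values in `[0, c (b - a)]` (`exists_convex_of_lipschitz`). The limit `G` of `gₖ` along a free
ultrafilter exists pointwise, and `Ψ = G - (G - Ψ)` is a difference of convex functions.
-/

open Set
open scoped ENNReal NNReal

noncomputable section

open MeasureTheory Filter Topology

/-! ### Difference quotients as means of a density -/

/-- The points of `[a,b]` at which `f` is differentiable. -/
def diffPts (f : ℝ → ℝ) (a b : ℝ) : Set ℝ := {t | t ∈ Set.Icc a b ∧ DifferentiableAt ℝ f t}

/-- `w` is an integrable density of `F` on `[a,b]`. -/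
structure IsDensityOn (F w : ℝ → ℝ) (a b : ℝ) : Prop where
  integrable : IntervalIntegrable w volume a b
  sub_eq : ∀ x ∈ Set.Icc a b, ∀ y ∈ Set.Icc a b, F y - F x = ∫ t in x..y, w t

lemma IsDensityOn.avg_integrable {F w : ℝ → ℝ} {a b x d : ℝ} (h : IsDensityOn F w a b)
    (hx : x ∈ Set.Icc a b) (hy : x + d ∈ Set.Icc a b) (hd : d ≠ 0) :
    IntervalIntegrable (fun s => w (x + d * s)) volume 0 1 := by
  have hab : a ≤ b := hx.1.trans hx.2
  have h1 : IntervalIntegrable w volume x (x + d) := by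
    refine h.integrable.mono_set ?_
    rw [Set.uIcc_of_le hab]
    exact Set.uIcc_subset_Icc hx hy
  have h2 := h1.comp_add_left x
  have h3 := h2.comp_mul_left (c := d)
  simpa [hd] using h3

/-- A difference quotient of `F` is the mean of the density of `F`, written over `[0,1]` so that
difference quotients over different intervals share one parameter space. -/
lemma IsDensityOn.slope_eq {F w : ℝ → ℝ} {a b x d : ℝ} (h : IsDensityOn F w a b)
    (hx : x ∈ Set.Icc a b) (hy : x + d ∈ Set.Icc a b) (hd : d ≠ 0) :
    (F (x + d) - F x) / d = ∫ s in (0 : ℝ)..1, w (x + d * s) := by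
  rw [intervalIntegral.integral_comp_add_mul w hd, h.sub_eq x hx _ hy]
  simp [div_eq_inv_mul]

lemma ae_affine_mem {a b x d : ℝ} {D : Set ℝ} (hD : ∀ᵐ t, t ∈ Set.Icc a b → t ∈ D)
    (hx : x ∈ Set.Icc a b) (hy : x + d ∈ Set.Icc a b) (hd : d ≠ 0) :
    ∀ᵐ s : ℝ, s ∈ Set.Ioo (0 : ℝ) 1 → x + d * s ∈ D := by
  have hq : Measure.QuasiMeasurePreserving (fun s : ℝ => d * s) volume volume := by
    refine ⟨by fun_prop, ?_⟩
    rw [Real.map_volume_mul_left hd]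
    exact Measure.smul_absolutelyContinuous
  have hq2 : Measure.QuasiMeasurePreserving (fun s : ℝ => x + s) volume volume :=
    (measurePreserving_add_left volume x).quasiMeasurePreserving
  filter_upwards [(hq2.comp hq).ae hD] with s hs h01
  apply hs
  have : x + d * s = (1 - s) • x + s • (x + d) := by simp; ring
  simp only [Function.comp]
  rw [this]
  exact convex_Icc a b hx hy (by linarith [h01.2]) h01.1.le (by ring)

lemma integral_mono_unit {f g : ℝ → ℝ} (hf : IntervalIntegrable f volume 0 1)
    (hg : IntervalIntegrable g volume 0 1) (h : ∀ᵐ s : ℝ, s ∈ Set.Ioo (0 : ℝ) 1 → f s ≤ g s) :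
    ∫ s in (0 : ℝ)..1, f s ≤ ∫ s in (0 : ℝ)..1, g s := by
  refine intervalIntegral.integral_mono_ae_restrict zero_le_one hf hg ?_
  rw [EventuallyLE, ← restrict_Ioo_eq_restrict_Icc, ae_restrict_iff' measurableSet_Ioo]
  exact h

/-- A function with a density that is monotone on a set of full measure is convex. -/
lemma IsDensityOn.convexOn {F w : ℝ → ℝ} {a b : ℝ} {D : Set ℝ} (h : IsDensityOn F w a b)
    (hD : ∀ᵐ t, t ∈ Set.Icc a b → t ∈ D) (hw : MonotoneOn w D) :
    ConvexOn ℝ (Set.Icc a b) F := by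
  refine convexOn_of_slope_mono_adjacent (convex_Icc a b) ?_
  intro x y z hx hz hxy hyz
  have hy : y ∈ Set.Icc a b := ⟨hx.1.trans hxy.le, hyz.le.trans hz.2⟩
  have exy : x + (y - x) = y := by ring
  have eyz : y + (z - y) = z := by ring
  have nxy : y - x ≠ 0 := (sub_pos.2 hxy).ne'
  have nyz : z - y ≠ 0 := (sub_pos.2 hyz).ne'
  have hy' : x + (y - x) ∈ Set.Icc a b := by rwa [exy]
  have hz' : y + (z - y) ∈ Set.Icc a b := by rwa [eyz]
  have h1 := h.slope_eq hx hy' nxy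
  have h2 := h.slope_eq hy hz' nyz
  rw [exy] at h1
  rw [eyz] at h2
  rw [h1, h2]
  refine integral_mono_unit (h.avg_integrable hx hy' nxy) (h.avg_integrable hy hz' nyz) ?_
  filter_upwards [ae_affine_mem hD hx hy' nxy, ae_affine_mem hD hy hz' nyz] with s h3 h4 hs
  refine hw (h3 hs) (h4 hs) ?_
  nlinarith [hs.1, hs.2]

/-! ### The derivative of a Lipschitz function and its variation -/

lemma ae_mem_diffPts {f : ℝ → ℝ} {a b : ℝ} {L : ℝ≥0} (hf : LipschitzOnWith L f (Set.Icc a b)) :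
    ∀ᵐ t, t ∈ Set.Icc a b → t ∈ diffPts f a b := by
  have hne : ∀ x : ℝ, ∀ᵐ t : ℝ, t ≠ x := fun x => by simp [ae_iff]
  filter_upwards [hf.ae_differentiableWithinAt_of_mem_real, hne a, hne b] with t ht ha hb hI
  exact ⟨hI, (ht hI).differentiableAt
    (Icc_mem_nhds (lt_of_le_of_ne hI.1 ha.symm) (lt_of_le_of_ne hI.2 hb))⟩

lemma isDensityOn_deriv {f : ℝ → ℝ} {a b : ℝ} {L : ℝ≥0} (hab : a ≤ b)
    (hf : LipschitzOnWith L f (Set.Icc a b)) : IsDensityOn f (deriv f) a b where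
  integrable := by
    rw [← Set.uIcc_of_le hab] at hf
    exact hf.absolutelyContinuousOnInterval.intervalIntegrable_deriv
  sub_eq x hx y hy := by
    have := (hf.mono (Set.uIcc_subset_Icc hx hy)).absolutelyContinuousOnInterval
    exact this.integral_deriv_eq_sub.symm

lemma derivVariation_sum_le {f : ℝ → ℝ} {a b c : ℝ} (hc : 0 ≤ c)
    (hV : derivVariation f a b ≤ ENNReal.ofReal c) {N : ℕ} {t : Fin (N + 1) → ℝ}
    (ht : StrictMono t) (hD : ∀ i, t i ∈ diffPts f a b) :
    ∑ i : Fin N, |deriv f (t i.succ) - deriv f (t i.castSucc)| ≤ c := by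
  rw [← ENNReal.ofReal_le_ofReal_iff hc, ENNReal.ofReal_sum_of_nonneg (fun _ _ => abs_nonneg _)]
  refine le_trans ?_ hV
  unfold derivVariation
  exact le_iSup_of_le N (le_iSup_of_le t (le_iSup_of_le ht (le_iSup_of_le hD le_rfl)))

lemma eVariationOn_deriv_le_s18 (f : ℝ → ℝ) (a b : ℝ) :
    eVariationOn (deriv f) (diffPts f a b) ≤ derivVariation f a b := by
  rw [eVariationOn.eVariationOn_eq_strictMonoOn]
  refine iSup_le ?_
  rintro ⟨n, u, hu, hm⟩
  have hu' : StrictMono (fun i : Fin (n + 1) => u i) := fun i j hij =>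
    hu (Nat.lt_succ_iff.1 i.2) (Nat.lt_succ_iff.1 j.2) hij
  have hm' : ∀ i : Fin (n + 1), u i ∈ diffPts f a b := fun i => hm _ (Nat.lt_succ_iff.1 i.2)
  unfold derivVariation
  refine le_iSup_of_le n (le_iSup_of_le _ (le_iSup_of_le hu' (le_iSup_of_le hm' ?_)))
  rw [Finset.sum_range]
  simp [edist_dist, Real.dist_eq]

/-! ### Bounds on difference quotients -/

/-- Difference quotients of `f` over consecutive segments vary no more than `f'` does: both are
compared pointwise in the common parameter `s` and then averaged. The increments `d i` may have
either sign, which allows one-sided quotients at both endpoints of `[a,b]`. -/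
lemma sum_slope_le {f : ℝ → ℝ} {a b c : ℝ} {L : ℝ≥0} (hc : 0 ≤ c)
    (hf : LipschitzOnWith L f (Set.Icc a b))
    (hV : derivVariation f a b ≤ ENNReal.ofReal c) {N : ℕ} {t d : Fin (N + 1) → ℝ}
    (ht : ∀ i, t i ∈ Set.Icc a b) (htd : ∀ i, t i + d i ∈ Set.Icc a b) (hd : ∀ i, d i ≠ 0)
    (hmono : ∀ s ∈ Set.Ioo (0 : ℝ) 1, StrictMono fun i => t i + d i * s) :
    ∑ i : Fin N, |(f (t i.succ + d i.succ) - f (t i.succ)) / d i.succ -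
      (f (t i.castSucc + d i.castSucc) - f (t i.castSucc)) / d i.castSucc| ≤ c := by
  have hab : a ≤ b := (ht 0).1.trans (ht 0).2
  have H := isDensityOn_deriv hab hf
  have hi := fun i => H.avg_integrable (ht i) (htd i) (hd i)
  have hD := ae_all_iff.2 fun i => ae_affine_mem (ae_mem_diffPts hf) (ht i) (htd i) (hd i)
  have hi2 : ∀ i : Fin N, IntervalIntegrable (fun s => |deriv f (t i.succ + d i.succ * s) -
      deriv f (t i.castSucc + d i.castSucc * s)|) volume 0 1 := fun i =>
    ((hi _).sub (hi _)).abs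
  calc _ ≤ ∑ i : Fin N, ∫ s in (0 : ℝ)..1, |deriv f (t i.succ + d i.succ * s) -
        deriv f (t i.castSucc + d i.castSucc * s)| := by
        refine Finset.sum_le_sum fun i _ => ?_
        rw [H.slope_eq (ht _) (htd _) (hd _), H.slope_eq (ht _) (htd _) (hd _),
          ← intervalIntegral.integral_sub (hi _) (hi _)]
        exact intervalIntegral.abs_integral_le_integral_abs zero_le_one
    _ = ∫ s in (0 : ℝ)..1, ∑ i : Fin N, |deriv f (t i.succ + d i.succ * s) -
        deriv f (t i.castSucc + d i.castSucc * s)| :=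
        (intervalIntegral.integral_finsetSum fun i _ => hi2 i).symm
    _ ≤ ∫ s in (0 : ℝ)..1, c := by
        refine integral_mono_unit ?_ (by simp) ?_
        · have hs := IntervalIntegrable.sum Finset.univ (fun i _ => hi2 i)
          rwa [Finset.sum_fn] at hs
        · filter_upwards [hD] with s hs h01
          exact derivVariation_sum_le hc hV (hmono s h01) fun i => hs i h01
    _ = c := by simp

/-- Every difference quotient of `f` is within `c` of its mean slope over `[a,b]`. -/
lemma abs_slope_sub_le {f : ℝ → ℝ} {a b c x y : ℝ} {L : ℝ≥0} (hab : a < b) (hc : 0 ≤ c)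
    (hf : LipschitzOnWith L f (Set.Icc a b))
    (hV : derivVariation f a b ≤ ENNReal.ofReal c)
    (hx : x ∈ Set.Icc a b) (hy : y ∈ Set.Icc a b) (hxy : x ≠ y) :
    |(f y - f x) / (y - x) - (f b - f a) / (b - a)| ≤ c := by
  have ha : a ∈ Set.Icc a b := ⟨le_rfl, hab.le⟩
  have e1 : x + (y - x) = y := by ring
  have e2 : a + (b - a) = b := by ring
  have n1 : y - x ≠ 0 := sub_ne_zero.2 hxy.symm
  have n2 : b - a ≠ 0 := (sub_pos.2 hab).ne'
  have hy' : x + (y - x) ∈ Set.Icc a b := by rwa [e1]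
  have hb' : a + (b - a) ∈ Set.Icc a b := by rw [e2]; exact ⟨hab.le, le_rfl⟩
  have H := isDensityOn_deriv hab.le hf
  have s1 := H.slope_eq hx hy' n1
  have s2 := H.slope_eq ha hb' n2
  have i1 := H.avg_integrable hx hy' n1
  have i2 := H.avg_integrable ha hb' n2
  rw [e1] at s1
  rw [e2] at s2
  rw [s1, s2, ← intervalIntegral.integral_sub i1 i2]
  refine (intervalIntegral.abs_integral_le_integral_abs zero_le_one).trans ?_
  refine (integral_mono_unit (g := fun _ => c) (i1.sub i2).abs (by simp) ?_).trans (by simp)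
  filter_upwards [ae_affine_mem (ae_mem_diffPts hf) hx hy' n1,
    ae_affine_mem (ae_mem_diffPts hf) ha hb' n2] with s h1 h2 hs
  have := (eVariationOn.edist_le (deriv f) (h1 hs) (h2 hs)).trans
    ((eVariationOn_deriv_le_s18 f a b).trans hV)
  rw [edist_dist, ENNReal.ofReal_le_ofReal_iff hc, Real.dist_eq] at this
  exact this

/-! ### Convex decomposition of a Lipschitz function -/

/-- A Lipschitz function with `∨(f'; a,b) ≤ c` is `g - (g - f)` with both terms convex, where `g`
is the primitive of the variation function of `f'`. The bound on `g` does not depend on `f`. -/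
lemma exists_convex_of_lipschitz {f : ℝ → ℝ} {a b c : ℝ} {L : ℝ≥0} (hab : a < b) (hc : 0 ≤ c)
    (hf : LipschitzOnWith L f (Set.Icc a b))
    (hV : derivVariation f a b ≤ ENNReal.ofReal c) :
    ∃ g : ℝ → ℝ, ConvexOn ℝ (Set.Icc a b) g ∧ ConvexOn ℝ (Set.Icc a b) (fun t => g t - f t) ∧
      ∀ t ∈ Set.Icc a b, g t ∈ Set.Icc 0 (c * (b - a)) := by
  set D := diffPts f a b with hDdef
  have hfin : ∀ S ⊆ D, eVariationOn (deriv f) S ≤ ENNReal.ofReal c := fun S hS =>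
    (eVariationOn.mono _ hS).trans ((eVariationOn_deriv_le_s18 f a b).trans hV)
  have htop : ∀ S ⊆ D, eVariationOn (deriv f) S ≠ ⊤ := fun S hS =>
    ((hfin S hS).trans_lt ENNReal.ofReal_lt_top).ne
  let p : ℝ → ℝ := fun t => (eVariationOn (deriv f) (D ∩ Set.Iic t)).toReal
  have hp : Monotone p := fun s t hst =>
    ENNReal.toReal_mono (htop _ Set.inter_subset_left)
      (eVariationOn.mono _ (Set.inter_subset_inter_right _ (Set.Iic_subset_Iic.2 hst)))
  have hp0 : ∀ t, 0 ≤ p t := fun t => ENNReal.toReal_nonneg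
  have hpc : ∀ t, p t ≤ c := fun t =>
    ENNReal.toReal_le_of_le_ofReal hc (hfin _ Set.inter_subset_left)
  have hint : ∀ x y, IntervalIntegrable p volume x y := fun x y => hp.intervalIntegrable
  have hinc : ∀ s ∈ D, ∀ t ∈ D, s ≤ t → |deriv f t - deriv f s| ≤ p t - p s := by
    intro s hs t ht hst
    have h1 := eVariationOn.add_le_union (deriv f) (s := D ∩ Set.Iic s) (t := D ∩ Set.Icc s t)
      (fun x hx y hy => hx.2.trans hy.2.1)
    have h2 := h1.trans (eVariationOn.mono (deriv f) (s := D ∩ Set.Iic t) (by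
      rintro x (hx | hx)
      · exact ⟨hx.1, hx.2.trans hst⟩
      · exact ⟨hx.1, hx.2.2⟩))
    have h3 := eVariationOn.edist_le (deriv f) (s := D ∩ Set.Icc s t) (x := t) (y := s)
      ⟨ht, hst, le_rfl⟩ ⟨hs, le_rfl, hst⟩
    have h4 := ENNReal.toReal_mono (htop _ Set.inter_subset_left) h2
    rw [ENNReal.toReal_add (htop _ Set.inter_subset_left) (htop _ Set.inter_subset_left)] at h4
    have h5 := ENNReal.toReal_mono (htop _ Set.inter_subset_left) h3
    rw [← dist_edist, Real.dist_eq] at h5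
    have h6 : p s + _ ≤ p t := h4
    linarith
  have hDae := ae_mem_diffPts hf
  have hg : IsDensityOn (fun t => ∫ s in a..t, p s) p a b :=
    ⟨hint _ _, fun x _ y _ => intervalIntegral.integral_interval_sub_left (hint _ _) (hint _ _)⟩
  have hfd := isDensityOn_deriv hab.le hf
  have hfi : ∀ x ∈ Set.Icc a b, ∀ y ∈ Set.Icc a b,
      IntervalIntegrable (deriv f) volume x y := fun x hx y hy => by
    refine hfd.integrable.mono_set ?_
    rw [Set.uIcc_of_le hab.le]
    exact Set.uIcc_subset_Icc hx hy
  have hh : IsDensityOn (fun t => (∫ s in a..t, p s) - f t) (fun t => p t - deriv f t) a b := by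
    refine ⟨hg.integrable.sub hfd.integrable, fun x hx y hy => ?_⟩
    rw [intervalIntegral.integral_sub (hint _ _) (hfi x hx y hy), ← hg.sub_eq x hx y hy,
      ← hfd.sub_eq x hx y hy]
    ring
  refine ⟨fun t => ∫ s in a..t, p s, hg.convexOn hDae (hp.monotoneOn _),
    hh.convexOn hDae ?_, fun t ht => ⟨?_, ?_⟩⟩
  · intro s hs t ht hst
    have := (le_abs_self _).trans (hinc s hs t ht hst)
    simp only
    linarith
  · exact intervalIntegral.integral_nonneg ht.1 fun s _ => hp0 s
  · calc ∫ s in a..t, p s ≤ ∫ s in a..t, c :=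
          intervalIntegral.integral_mono ht.1 (hint _ _) (by simp) hpc
      _ = c * (t - a) := by simp [mul_comm]
      _ ≤ c * (b - a) := by gcongr; exact ht.2

/-! ### Passage to the limit -/

lemma convexOn_of_tendsto {ι : Type*} {l : Filter ι} [l.NeBot] {S : Set ℝ} {F : ι → ℝ → ℝ}
    {G : ℝ → ℝ} (hS : Convex ℝ S) (hF : ∀ i, ConvexOn ℝ S (F i))
    (hlim : ∀ t ∈ S, Tendsto (fun i => F i t) l (𝓝 (G t))) : ConvexOn ℝ S G := by
  refine ⟨hS, fun x hx y hy α β hα hβ hαβ => ?_⟩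
  refine le_of_tendsto_of_tendsto' (hlim _ (hS hx hy hα hβ hαβ))
    (((hlim x hx).const_smul α).add ((hlim y hy).const_smul β)) fun i => ?_
  exact (hF i).2 hx hy hα hβ hαβ

/-- One-sided difference quotients converge to the derivative; the factor `σ` selects the side. -/
lemma tendsto_signed_slope {f : ℝ → ℝ} {x σ : ℝ} (hσ : σ ≠ 0) (hf : DifferentiableAt ℝ f x) :
    Tendsto (fun h : ℝ => (f (x + σ * h) - f x) / (σ * h)) (𝓝[>] 0) (𝓝 (deriv f x)) := by
  have h1 := hf.hasDerivAt.tendsto_slope_zero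
  have h2 : Tendsto (fun h : ℝ => σ * h) (𝓝[>] 0) (𝓝[≠] 0) := by
    refine tendsto_nhdsWithin_iff.2 ⟨?_, ?_⟩
    · have : Tendsto (fun h : ℝ => σ * h) (𝓝 0) (𝓝 (σ * 0)) := by
        exact (continuous_const_mul σ).tendsto 0
      rw [mul_zero] at this
      exact this.mono_left nhdsWithin_le_nhds
    · filter_upwards [self_mem_nhdsWithin] with h hh
      exact mul_ne_zero hσ (ne_of_gt hh)
  refine (h1.comp h2).congr fun h => ?_
  simp [div_eq_inv_mul]

lemma derivVariation_le_of_tendsto {a b c : ℝ} {Ψ : ℕ → ℝ → ℝ} {f : ℝ → ℝ}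
    (hlip : ∀ k, ∃ L : ℝ≥0, LipschitzOnWith L (Ψ k) (Set.Icc a b))
    (hconv : ∀ t ∈ Set.Icc a b, Tendsto (fun k => Ψ k t) atTop (𝓝 (f t))) (hc : 0 ≤ c)
    (hvar : ∀ k, derivVariation (Ψ k) a b ≤ ENNReal.ofReal c) :
    derivVariation f a b ≤ ENNReal.ofReal c := by
  unfold derivVariation
  refine iSup_le fun N => iSup_le fun t => iSup_le fun ht => iSup_le fun hD => ?_
  rcases Nat.eq_zero_or_pos N with rfl | hN
  · simp
  simp only [Real.norm_eq_abs]
  rw [← ENNReal.ofReal_sum_of_nonneg (fun _ _ => abs_nonneg _)]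
  refine ENNReal.ofReal_le_ofReal ?_
  -- Quotients look to the right, except at the last point, which may be `b`.
  let σ : Fin (N + 1) → ℝ := fun i => if i = Fin.last N then -1 else 1
  have hσ0 : ∀ i, σ i ≠ 0 := fun i => by simp only [σ]; split_ifs <;> norm_num
  have hσ1 : ∀ i, |σ i| ≤ 1 := fun i => by simp only [σ]; split_ifs <;> simp
  have hlim : Tendsto (fun h : ℝ => ∑ i : Fin N,
      |(f (t i.succ + σ i.succ * h) - f (t i.succ)) / (σ i.succ * h) -
        (f (t i.castSucc + σ i.castSucc * h) - f (t i.castSucc)) / (σ i.castSucc * h)|)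
      (𝓝[>] 0) (𝓝 (∑ i : Fin N, |deriv f (t i.succ) - deriv f (t i.castSucc)|)) :=
    tendsto_finsetSum _ fun i _ => ((tendsto_signed_slope (hσ0 _) (hD _).2).sub
      (tendsto_signed_slope (hσ0 _) (hD _).2)).abs
  refine le_of_tendsto hlim ?_
  have hsmall : ∀ᶠ h : ℝ in 𝓝[>] 0, ∀ i : Fin N, 2 * h < t i.succ - t i.castSucc := by
    refine eventually_all.2 fun i => ?_
    have hpos : 0 < (t i.succ - t i.castSucc) / 2 :=
      half_pos (sub_pos.2 (ht i.castSucc_lt_succ))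
    filter_upwards [Ioo_mem_nhdsGT hpos] with h hh
    linarith [hh.2]
  filter_upwards [hsmall, self_mem_nhdsWithin] with h hh hpos
  replace hpos : 0 < h := hpos
  have hbd : ∀ i, t i + σ i * h ∈ Set.Icc a b := by
    intro i
    have hi := (hD i).1
    rcases Fin.eq_castSucc_or_eq_last i with ⟨j, rfl⟩ | rfl
    · have h1 : σ j.castSucc = 1 := by simp [σ, (Fin.castSucc_lt_last j).ne]
      have h2 := hh j
      have h3 := (hD j.succ).1.2
      rw [h1]
      exact ⟨by linarith [hi.1], by linarith⟩
    · have h1 : σ (Fin.last N) = -1 := by simp [σ]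
      obtain ⟨M, rfl⟩ : ∃ M, N = M + 1 := ⟨N - 1, by omega⟩
      have h2 := hh (Fin.last M)
      have h3 := (hD (Fin.last M).castSucc).1.1
      rw [Fin.succ_last] at h2
      rw [h1]
      exact ⟨by linarith, by linarith [hi.2]⟩
  have hmono : ∀ s ∈ Set.Ioo (0 : ℝ) 1, StrictMono fun i => t i + σ i * h * s := by
    intro s hs
    refine Fin.strictMono_iff_lt_succ.2 fun i => ?_
    have hsh : h * s ≤ h := mul_le_of_le_one_right hpos.le hs.2.le
    have key : ∀ j, |σ j * h * s| ≤ h := fun j => by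
      rw [mul_assoc, abs_mul, abs_of_nonneg (mul_nonneg hpos.le hs.1.le)]
      exact (mul_le_of_le_one_left (mul_nonneg hpos.le hs.1.le) (hσ1 j)).trans hsh
    have k1 := (abs_le.1 (key i.succ)).1
    have k2 := (abs_le.1 (key i.castSucc)).2
    have := hh i
    linarith
  have hlimk : Tendsto (fun k : ℕ => ∑ i : Fin N,
      |(Ψ k (t i.succ + σ i.succ * h) - Ψ k (t i.succ)) / (σ i.succ * h) -
        (Ψ k (t i.castSucc + σ i.castSucc * h) - Ψ k (t i.castSucc)) / (σ i.castSucc * h)|)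
      atTop (𝓝 (∑ i : Fin N,
      |(f (t i.succ + σ i.succ * h) - f (t i.succ)) / (σ i.succ * h) -
        (f (t i.castSucc + σ i.castSucc * h) - f (t i.castSucc)) / (σ i.castSucc * h)|)) :=
    tendsto_finsetSum _ fun i _ =>
      ((((hconv _ (hbd _)).sub (hconv _ (hD _).1)).div_const _).sub
        (((hconv _ (hbd _)).sub (hconv _ (hD _).1)).div_const _)).abs
  refine le_of_tendsto' hlimk fun k => ?_
  obtain ⟨L, hL⟩ := hlip k
  exact sum_slope_le (d := fun i => σ i * h) hc hL (hvar k) (fun i => (hD i).1) hbd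
    (fun i => mul_ne_zero (hσ0 i) hpos.ne') hmono

lemma exists_lipschitz_of_tendsto {a b c : ℝ} {Ψ : ℕ → ℝ → ℝ} {f : ℝ → ℝ} (hab : a < b)
    (hlip : ∀ k, ∃ L : ℝ≥0, LipschitzOnWith L (Ψ k) (Set.Icc a b))
    (hconv : ∀ t ∈ Set.Icc a b, Tendsto (fun k => Ψ k t) atTop (𝓝 (f t))) (hc : 0 ≤ c)
    (hvar : ∀ k, derivVariation (Ψ k) a b ≤ ENNReal.ofReal c) :
    ∃ L : ℝ≥0, LipschitzOnWith L f (Set.Icc a b) := by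
  refine ⟨(c + |(f b - f a) / (b - a)|).toNNReal, LipschitzOnWith.of_dist_le_mul ?_⟩
  intro y hy x hx
  rw [Real.coe_toNNReal _ (by positivity), Real.dist_eq, Real.dist_eq]
  rcases eq_or_ne x y with rfl | hxy
  · simp
  have ha : a ∈ Set.Icc a b := ⟨le_rfl, hab.le⟩
  have hb : b ∈ Set.Icc a b := ⟨hab.le, le_rfl⟩
  have hlim := ((((hconv y hy).sub (hconv x hx)).div_const (y - x)).sub
    (((hconv b hb).sub (hconv a ha)).div_const (b - a))).abs
  have h1 : |(f y - f x) / (y - x) - (f b - f a) / (b - a)| ≤ c :=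
    le_of_tendsto' hlim fun k => by
      obtain ⟨L, hL⟩ := hlip k
      exact abs_slope_sub_le hab hc hL (hvar k) hx hy hxy
  have h2 : |(f y - f x) / (y - x)| ≤ c + |(f b - f a) / (b - a)| := by
    have := abs_sub_abs_le_abs_sub ((f y - f x) / (y - x)) ((f b - f a) / (b - a))
    linarith
  have h3 : 0 < |y - x| := abs_pos.2 (sub_ne_zero.2 hxy.symm)
  rwa [abs_div, div_le_iff₀ h3] at h2

/-- if Lipschitz functions `Ψₖ` on `[a,b]` converge uniformly to `Ψ` and the
variations `∨(Ψₖ'; a,b)` are bounded by `c`, then `Ψ` is differentiable on a dense set of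
full measure in `[a,b]`, `∨(Ψ'; a,b) ≤ 2c`, and `Ψ` is a difference of two convex
functions on `[a,b]`. -/
theorem limit_of_bounded_derivVariation
    (a b : ℝ) (hab : a < b) (Ψ : ℕ → ℝ → ℝ) (Ψlim : ℝ → ℝ)
    (hlip : ∀ k, ∃ L : ℝ≥0, LipschitzOnWith L (Ψ k) (Set.Icc a b))
    (hconv : TendstoUniformlyOn Ψ Ψlim Filter.atTop (Set.Icc a b))
    (c : ℝ) (hc : 0 < c)
    (hvar : ∀ k, derivVariation (Ψ k) a b ≤ ENNReal.ofReal c) :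
    volume (Set.Icc a b \ {t | DifferentiableAt ℝ Ψlim t}) = 0 ∧
    Set.Icc a b ⊆ closure {t | t ∈ Set.Icc a b ∧ DifferentiableAt ℝ Ψlim t} ∧
    derivVariation Ψlim a b ≤ ENNReal.ofReal (2 * c) ∧
    ∃ f₁ f₂ : ℝ → ℝ, ConvexOn ℝ (Set.Icc a b) f₁ ∧ ConvexOn ℝ (Set.Icc a b) f₂ ∧
      ∀ t ∈ Set.Icc a b, Ψlim t = f₁ t - f₂ t := by
  have hpt : ∀ t ∈ Set.Icc a b, Tendsto (fun k => Ψ k t) atTop (𝓝 (Ψlim t)) :=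
    fun t ht => hconv.tendsto_at ht
  obtain ⟨L, hL⟩ := exists_lipschitz_of_tendsto hab hlip hpt hc.le hvar
  have hae := ae_mem_diffPts hL
  refine ⟨?_, ?_, ?_, ?_⟩
  · refine measure_mono_null ?_ (ae_iff.1 hae)
    intro t ht h
    exact ht.2 (h ht.1).2
  · have hd := Measure.dense_of_ae hae
    have h1 : Set.Ioo a b ⊆ closure (Set.Ioo a b ∩ {t | t ∈ Set.Icc a b → t ∈ diffPts Ψlim a b}) :=
      hd.open_subset_closure_inter isOpen_Ioo
    refine (closure_Ioo hab.ne).symm.subset.trans ?_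
    refine closure_minimal (h1.trans (closure_mono ?_)) isClosed_closure
    exact fun t ht => ht.2 (Set.Ioo_subset_Icc_self ht.1)
  · exact (derivVariation_le_of_tendsto hlip hpt hc.le hvar).trans
      (ENNReal.ofReal_le_ofReal (by linarith))
  · have hex : ∀ k, ∃ g : ℝ → ℝ, ConvexOn ℝ (Set.Icc a b) g ∧
        ConvexOn ℝ (Set.Icc a b) (fun t => g t - Ψ k t) ∧
        ∀ t ∈ Set.Icc a b, g t ∈ Set.Icc 0 (c * (b - a)) := fun k => by
      obtain ⟨L, hL⟩ := hlip k
      exact exists_convex_of_lipschitz hab hc.le hL (hvar k)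
    choose g hg1 hg2 hg3 using hex
    -- A free ultrafilter makes the bounded sequences `g k t` converge simultaneously in `t`.
    have hG : ∀ t, ∃ y, t ∈ Set.Icc a b →
        Tendsto (fun k => g k t) (hyperfilter ℕ : Filter ℕ) (𝓝 y) := fun t => by
      by_cases ht : t ∈ Set.Icc a b
      · obtain ⟨y, -, hy⟩ := (isCompact_Icc (a := (0 : ℝ)) (b := c * (b - a))).ultrafilter_le_nhds'
          ((hyperfilter ℕ).map fun k => g k t)
          (Filter.Eventually.of_forall (f := (hyperfilter ℕ : Filter ℕ)) fun k => hg3 k t ht)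
        exact ⟨y, fun _ => hy⟩
      · exact ⟨0, fun h => absurd h ht⟩
    choose G hG using hG
    refine ⟨G, fun t => G t - Ψlim t, convexOn_of_tendsto (convex_Icc a b) hg1 hG,
      convexOn_of_tendsto (convex_Icc a b) hg2 fun t ht => (hG t ht).sub
        ((hpt t ht).mono_left Nat.hyperfilter_le_atTop), fun t _ => by ring⟩
end
end
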